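/- Let 1 < p < ∞, (Ω,Σ,μ) a probability space, and X a Banach space. Then X has property (δS_μ) if and only if every relatively weakly compact subset of L^p(μ,X) is a δS-set of L^p(μ,X). -/

import Mathlib

open MeasureTheory Filter Set ENNReal Pointwise

noncomputable section

def IsWeaklyCompact {X : Type*} [NormedAddCommGroup X] [NormedSpace ℝ X] (W : Set X) : Prop :=
  IsCompact (toWeakSpace ℝ X '' W)

def IsRelWeaklyCompact {X : Type*} [NormedAddCommGroup X] [NormedSpace ℝ X] (W : Set X) : Prop :=
  IsCompact (closure (toWeakSpace ℝ X '' W))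

variable {Ω : Type*} [MeasurableSpace Ω] {X : Type*} [NormedAddCommGroup X] [NormedSpace ℝ X]

/-- A set of functions in `L¹(μ,X)` is uniformly integrable if it is bounded and the integrals
of the norms over small sets are uniformly small. -/
def UnifIntegrableSet (μ : Measure Ω) (K : Set (Lp X 1 μ)) : Prop :=
  (∃ C : ℝ, ∀ f ∈ K, ‖f‖ ≤ C) ∧
  ∀ ε : ℝ, 0 < ε → ∃ δ : ℝ, 0 < δ ∧ ∀ f ∈ K, ∀ A : Set Ω, μ A ≤ ENNReal.ofReal δ →
    ∫ ω in A, ‖(f : Ω → X) ω‖ ∂μ ≤ ε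

/-- `K ⊆ L¹(μ,X)` is a δS-set if it is uniformly integrable and for every `δ > 0` there is a
weakly compact `W ⊆ X` with `μ (f ⁻¹' W) ≥ 1 - δ` for all `f ∈ K`. -/
def IsDeltaSSet (μ : Measure Ω) (K : Set (Lp X 1 μ)) : Prop :=
  UnifIntegrableSet μ K ∧
  ∀ δ : ℝ, 0 < δ → ∃ W : Set X, IsWeaklyCompact W ∧
    ∀ f ∈ K, 1 - ENNReal.ofReal δ ≤ μ ((f : Ω → X) ⁻¹' W)

/-- A Banach space `X` has property (δSμ) if every relatively weakly compact subset of
`L¹(μ,X)` is a δS-set. -/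
def DeltaSProp (μ : Measure Ω) (X : Type*) [NormedAddCommGroup X] [NormedSpace ℝ X] : Prop :=
  ∀ K : Set (Lp X 1 μ), IsRelWeaklyCompact K → IsDeltaSSet μ K

open Topology

theorem weakTendsto_iff {Z α : Type*} [NormedAddCommGroup Z] [NormedSpace ℝ Z] {l : Filter α}
    {u : α → Z} {z : Z} :
    Tendsto (fun a => toWeakSpace ℝ Z (u a)) l (𝓝 (toWeakSpace ℝ Z z)) ↔
      ∀ φ : StrongDual ℝ Z, Tendsto (fun a => φ (u a)) l (𝓝 (φ z)) := by
  have hinj : Function.Injective (topDualPairing ℝ Z).flip := by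
    intro x y hxy
    refine (SeparatingDual.eq_iff_forall_dual_eq (R := ℝ)).2 fun g => ?_
    exact DFunLike.congr_fun hxy g
  exact WeakBilin.tendsto_iff_forall_eval_tendsto (topDualPairing ℝ Z).flip hinj

theorem continuous_weakSpace_dual {Z : Type*} [NormedAddCommGroup Z] [NormedSpace ℝ Z]
    (φ : StrongDual ℝ Z) :
    Continuous (fun x : WeakSpace ℝ Z => φ ((toWeakSpace ℝ Z).symm x)) :=
  WeakBilin.eval_continuous (topDualPairing ℝ Z).flip φ

theorem isRelWeaklyCompact_range {Z : Type*} [NormedAddCommGroup Z] [NormedSpace ℝ Z]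
    {u : ℕ → Z} {z : Z} (h : ∀ φ : StrongDual ℝ Z, Tendsto (fun n => φ (u n)) atTop (𝓝 (φ z))) :
    IsRelWeaklyCompact (range u) := by
  have h1 := (weakTendsto_iff.2 h).isCompact_insert_range
  refine h1.closure_of_subset ?_
  rw [← range_comp]
  exact subset_insert _ _

theorem IsRelWeaklyCompact.exists_norm_le {Z : Type*} [NormedAddCommGroup Z] [NormedSpace ℝ Z]
    {K : Set Z} (hK : IsRelWeaklyCompact K) : ∃ C : ℝ, ∀ f ∈ K, ‖f‖ ≤ C := by
  have := banach_steinhaus (𝕜 := ℝ) (𝕜₂ := ℝ) (σ₁₂ := RingHom.id ℝ)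
    (g := fun f : K => NormedSpace.inclusionInDoubleDual ℝ Z f) ?_
  · obtain ⟨C, hC⟩ := this
    refine ⟨C, fun f hf => ?_⟩
    have := hC ⟨f, hf⟩
    rwa [show ‖NormedSpace.inclusionInDoubleDual ℝ Z f‖ = ‖f‖ from
      (NormedSpace.inclusionInDoubleDualLi (E := Z) ℝ).norm_map f] at this
  · intro φ
    obtain ⟨C, hC⟩ := (hK.image (continuous_weakSpace_dual φ)).isBounded.exists_norm_le
    exact ⟨C, fun f => hC _ ⟨_, subset_closure ⟨f, f.2, rfl⟩, rfl⟩⟩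

theorem IsWeaklyCompact.image {Z Y : Type*} [NormedAddCommGroup Z] [NormedSpace ℝ Z]
    [NormedAddCommGroup Y] [NormedSpace ℝ Y] {K : Set Z} (hK : IsWeaklyCompact K) (T : Z →L[ℝ] Y) :
    IsWeaklyCompact (T '' K) := by
  have h := IsCompact.image hK (WeakSpace.map T).continuous
  rw [image_image] at h
  unfold IsWeaklyCompact
  rw [image_image]
  exact h

theorem IsRelWeaklyCompact.image {Z Y : Type*} [NormedAddCommGroup Z] [NormedSpace ℝ Z]
    [NormedAddCommGroup Y] [NormedSpace ℝ Y] {K : Set Z} (hK : IsRelWeaklyCompact K)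
    (T : Z →L[ℝ] Y) : IsRelWeaklyCompact (T '' K) := by
  refine (IsCompact.image hK (WeakSpace.map T).continuous).closure_of_subset ?_
  rintro _ ⟨_, ⟨x, hx, rfl⟩, rfl⟩
  exact ⟨_, subset_closure ⟨x, hx, rfl⟩, rfl⟩

theorem IsWeaklyCompact.union {Z : Type*} [NormedAddCommGroup Z] [NormedSpace ℝ Z]
    {K L : Set Z} (hK : IsWeaklyCompact K) (hL : IsWeaklyCompact L) : IsWeaklyCompact (K ∪ L) := by
  unfold IsWeaklyCompact
  rw [image_union]
  exact IsCompact.union hK hL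

theorem IsWeaklyCompact.add {Z : Type*} [NormedAddCommGroup Z] [NormedSpace ℝ Z]
    {K L : Set Z} (hK : IsWeaklyCompact K) (hL : IsWeaklyCompact L) : IsWeaklyCompact (K + L) := by
  unfold IsWeaklyCompact
  rw [image_add]
  exact IsCompact.add hK hL

theorem IsCompact.isWeaklyCompact {Z : Type*} [NormedAddCommGroup Z] [NormedSpace ℝ Z]
    {K : Set Z} (hK : IsCompact K) : IsWeaklyCompact K :=
  hK.image (toWeakSpaceCLM ℝ Z).continuous

theorem isClosed_image_toWeakSpace {Z : Type*} [NormedAddCommGroup Z] [NormedSpace ℝ Z]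
    {s : Set Z} (hs : Convex ℝ s) (hc : IsClosed s) : IsClosed (toWeakSpace ℝ Z '' s) := by
  have := hs.toWeakSpace_closure ℝ
  rw [hc.closure_eq] at this
  rw [this]
  exact isClosed_closure

/-- Mazur's lemma. -/
theorem mem_of_weakTendsto {Z α : Type*} [NormedAddCommGroup Z] [NormedSpace ℝ Z] {l : Filter α}
    [l.NeBot] {u : α → Z} {z : Z} {s : Set Z} (hs : Convex ℝ s) (hc : IsClosed s)
    (h : ∀ φ : StrongDual ℝ Z, Tendsto (fun n => φ (u n)) l (𝓝 (φ z)))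
    (hu : ∀ᶠ n in l, u n ∈ s) : z ∈ s := by
  have := (isClosed_image_toWeakSpace hs hc).mem_of_tendsto (weakTendsto_iff.2 h)
    (hu.mono fun n hn => ⟨_, hn, rfl⟩)
  obtain ⟨y, hy, hyz⟩ := this
  rwa [← (toWeakSpace ℝ Z).injective hyz]

theorem exists_mem_convexHull_norm_lt {Z : Type*} [NormedAddCommGroup Z] [NormedSpace ℝ Z]
    {u : ℕ → Z} (h : ∀ φ : StrongDual ℝ Z, Tendsto (fun n => φ (u n)) atTop (𝓝 0))
    (n : ℕ) {ε : ℝ} (hε : 0 < ε) : ∃ y ∈ convexHull ℝ (u '' Ici n), ‖y‖ < ε := by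
  have := mem_of_weakTendsto (z := 0) (u := u) (l := atTop)
    (convex_convexHull ℝ (u '' Ici n)).closure isClosed_closure (by simpa using h)
    (eventually_atTop.2 ⟨n, fun k hk => subset_closure (subset_convexHull ℝ _ ⟨k, hk, rfl⟩)⟩)
  obtain ⟨y, hy, hy2⟩ := Metric.mem_closure_iff.1 this ε hε
  exact ⟨y, hy, by simpa using hy2⟩

/-- A sequence, all of whose subsequences have convex combinations of small norm, is weakly null. -/
theorem weakTendsto_zero_of_convexHull {Z : Type*} [NormedAddCommGroup Z] [NormedSpace ℝ Z]
    {u : ℕ → Z} (h : ∀ ψ : ℕ → ℕ, StrictMono ψ → ∀ ε : ℝ, 0 < ε →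
      ∃ y ∈ convexHull ℝ (range (u ∘ ψ)), ‖y‖ < ε) (φ : StrongDual ℝ Z) :
    Tendsto (fun n => φ (u n)) atTop (𝓝 0) := by
  have key : ∀ φ : StrongDual ℝ Z, ∀ c : ℝ, 0 < c → ∀ᶠ n in atTop, φ (u n) < c := by
    intro φ c hc
    by_contra hcon
    rw [not_eventually] at hcon
    obtain ⟨ψ, hψ, hψ2⟩ := extraction_of_frequently_atTop hcon
    obtain ⟨y, hy, hy2⟩ := h ψ hψ (c / (‖φ‖ + 1)) (by positivity)
    have h1 : c ≤ φ y := by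
      have : convexHull ℝ (range (u ∘ ψ)) ⊆ {x | c ≤ φ x} := by
        refine convexHull_min ?_ (convex_halfSpace_ge φ.toLinearMap.isLinear c)
        rintro _ ⟨k, rfl⟩
        exact not_lt.1 (hψ2 k)
      exact this hy
    have h2 := (le_abs_self _).trans (φ.le_opNorm y)
    rw [lt_div_iff₀ (by positivity)] at hy2
    nlinarith [norm_nonneg y, norm_nonneg φ]
  rw [Metric.tendsto_atTop']
  intro ε hε
  obtain ⟨N, hN⟩ := eventually_atTop.1 ((key φ ε hε).and (key (-φ) ε hε))
  refine ⟨N, fun n hn => ?_⟩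
  obtain ⟨h1, h2⟩ := hN n hn.le
  rw [Real.dist_eq, sub_zero, abs_lt]
  simp only [neg_apply] at h2
  constructor <;> linarith

theorem exists_dual_vanishing {Z : Type*} [NormedAddCommGroup Z] [NormedSpace ℝ Z]
    (ξ : StrongDual ℝ (StrongDual ℝ Z)) {θ : ℝ} (hθ : 0 < θ)
    (hξ : ∀ x : Z, θ ≤ ‖ξ - NormedSpace.inclusionInDoubleDual ℝ Z x‖) (s : Finset Z) :
    ∃ φ : StrongDual ℝ Z, ‖φ‖ ≤ 1 ∧ (∀ x ∈ s, φ x = 0) ∧ θ / 2 < ξ φ := by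
  let J := NormedSpace.inclusionInDoubleDual ℝ Z
  let N : Submodule ℝ (StrongDual ℝ Z) := ⨅ x : s, LinearMap.ker ((J x).toLinearMap)
  have hN : ∀ φ ∈ N, ∀ x ∈ s, φ x = 0 := by
    intro φ hφ x hx
    have := (Submodule.mem_iInf _).1 hφ ⟨x, hx⟩
    simpa [J] using this
  by_contra! hcon
  have hbound : ∀ φ : N, ‖(ξ.comp N.subtypeL) φ‖ ≤ θ / 2 * ‖(φ : StrongDual ℝ Z)‖ := by
    have h1 : ∀ φ : N, ξ φ ≤ θ / 2 * ‖(φ : StrongDual ℝ Z)‖ := by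
      intro φ
      rcases eq_or_ne φ 0 with rfl | h0
      · simp
      have hpos : 0 < ‖(φ : StrongDual ℝ Z)‖ :=
        norm_pos_iff.2 fun h => h0 (Subtype.ext h)
      have := hcon (‖(φ : StrongDual ℝ Z)‖⁻¹ • φ.1) ?_ ?_
      · rw [map_smul, smul_eq_mul, inv_mul_le_iff₀ hpos] at this
        linarith
      · rw [norm_smul, norm_inv, norm_norm]
        exact (inv_mul_cancel₀ hpos.ne').le
      · intro x hx
        simp [hN φ φ.2 x hx]
    intro φ
    have h2 := h1 φ
    have h3 := h1 (-φ)
    simp only [Submodule.coe_neg, map_neg, norm_neg] at h3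
    rw [Real.norm_eq_abs]
    exact abs_le.2 ⟨by simp; linarith, by simpa using h2⟩
  obtain ⟨η, hη, hη2⟩ := exists_extension_norm_eq N (ξ.comp N.subtypeL)
  have hle : ‖η‖ ≤ θ / 2 := by
    rw [hη2]
    exact ContinuousLinearMap.opNorm_le_bound _ (by positivity) hbound
  have hmem : (ξ - η).toLinearMap ∈ Submodule.span ℝ (range fun x : s => (J x).toLinearMap) := by
    refine mem_span_of_iInf_ker_le_ker fun φ hφ => ?_
    have := hη ⟨φ, hφ⟩
    simp at this
    simp [this]
  have hmem2 : ∃ x : Z, J x = ξ - η := by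
    have : Submodule.span ℝ (range fun x : s => (J x).toLinearMap) ≤
        LinearMap.range ((ContinuousLinearMap.coeLM ℝ).comp J.toLinearMap) := by
      rw [Submodule.span_le]
      rintro _ ⟨x, rfl⟩
      exact ⟨x, rfl⟩
    obtain ⟨x, hx⟩ := this hmem
    exact ⟨x, ContinuousLinearMap.coe_injective hx⟩
  obtain ⟨x, hx⟩ := hmem2
  have := hξ x
  rw [show NormedSpace.inclusionInDoubleDual ℝ Z x = ξ - η from hx,
    show ξ - (ξ - η) = η by ext φ; simp] at this
  linarith

/-- A version of the Eberlein–Šmulian theorem, in terms of convex combinations of perturbed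
sequences. -/
theorem isRelWeaklyCompact_of_seq {Z : Type*} [NormedAddCommGroup Z] [NormedSpace ℝ Z]
    [CompleteSpace Z] {A : Set Z} (hb : ∃ C : ℝ, ∀ a ∈ A, ‖a‖ ≤ C)
    (h : ∀ u : ℕ → Z, (∀ n, u n ∈ A) → ∀ ε : ℝ, 0 < ε → ∃ ψ : ℕ → ℕ, StrictMono ψ ∧
      ∃ w : ℕ → Z, (∀ n, ‖w n - u (ψ n)‖ ≤ ε) ∧
        ∃ g : Z, ∀ n, g ∈ closure (convexHull ℝ (w '' Ici n))) :
    IsRelWeaklyCompact A := by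
  have hcl : IsClosed (range (NormedSpace.inclusionInDoubleDual ℝ Z)) := by
    have h0 : Isometry (NormedSpace.inclusionInDoubleDual ℝ Z) :=
      (NormedSpace.inclusionInDoubleDualLi (E := Z) ℝ).isometry
    exact h0.isClosedEmbedding.isClosed_range
  refine NormedSpace.isCompact_closure_of_isBounded ℝ Z _ ?_ ?_
  · obtain ⟨C, hC⟩ := hb
    refine isBounded_iff_forall_norm_le.2 ⟨C, ?_⟩
    rintro x ⟨y, hy, hyx⟩
    rw [← (toWeakSpace ℝ Z).injective hyx]
    exact hC y hy
  intro x hx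
  by_contra hnot
  let ξ : StrongDual ℝ (StrongDual ℝ Z) := WeakDual.toStrongDual x
  have hξ : ξ ∉ range (NormedSpace.inclusionInDoubleDual ℝ Z) := by
    rintro ⟨y, hy⟩
    exact hnot ⟨toWeakSpace ℝ Z y, WeakDual.toStrongDual.injective hy⟩
  let θ := Metric.infDist ξ (range (NormedSpace.inclusionInDoubleDual ℝ Z))
  have hθ : 0 < θ := (hcl.notMem_iff_infDist_pos (range_nonempty _)).1 hξ
  have hθ2 : ∀ x : Z, θ ≤ ‖ξ - NormedSpace.inclusionInDoubleDual ℝ Z x‖ := fun x =>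
    (Metric.infDist_le_dist_of_mem (mem_range_self x)).trans_eq
      (dist_eq_norm (E := StrongDual ℝ (StrongDual ℝ Z)) _ _)
  have happrox : ∀ s : Finset (StrongDual ℝ Z), ∃ a ∈ A, ∀ φ ∈ s, |φ a - ξ φ| < θ / 4 := by
    intro s
    have hopen : IsOpen {y : WeakDual ℝ (StrongDual ℝ Z) | ∀ φ ∈ s, |y φ - x φ| < θ / 4} := by
      rw [show {y : WeakDual ℝ (StrongDual ℝ Z) | ∀ φ ∈ s, |y φ - x φ| < θ / 4} =
        ⋂ φ ∈ s, {y | |y φ - x φ| < θ / 4} by ext; simp]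
      refine isOpen_biInter_finset fun φ _ => isOpen_lt ?_ continuous_const
      exact ((WeakDual.eval_continuous φ).sub continuous_const).abs
    obtain ⟨y, hy1, _, ⟨a, ha, rfl⟩, rfl⟩ := mem_closure_iff.1 hx _ hopen (by simp [hθ])
    exact ⟨a, ha, fun φ hφ => hy1 φ hφ⟩
  obtain ⟨f, hf1, hf2⟩ := exists_seq_of_forall_finset_exists
    (P := fun q : StrongDual ℝ Z × Z => ‖q.1‖ ≤ 1 ∧ θ / 2 < ξ q.1 ∧ q.2 ∈ A ∧ θ / 4 ≤ q.1 q.2)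
    (r := fun q q' => q'.1 q.2 = 0 ∧ θ / 4 ≤ q.1 q'.2) (by
      classical
      intro s hs
      obtain ⟨φ, hφ1, hφ2, hφ3⟩ := exists_dual_vanishing ξ hθ hθ2 (s.image Prod.snd)
      obtain ⟨a, ha, ha2⟩ := happrox (insert φ (s.image Prod.fst))
      refine ⟨(φ, a), ⟨hφ1, hφ3, ha, ?_⟩, fun q hq => ⟨?_, ?_⟩⟩
      · have := abs_lt.1 (ha2 φ (Finset.mem_insert_self _ _))
        simp only; linarith
      · exact hφ2 _ (Finset.mem_image_of_mem _ hq)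
      · have := abs_lt.1 (ha2 q.1 (Finset.mem_insert_of_mem (Finset.mem_image_of_mem _ hq)))
        have := (hs q hq).2.1
        simp only; linarith)
  have hf3 : ∀ j m, j ≤ m → θ / 4 ≤ (f j).1 (f m).2 := by
    intro j m hjm
    rcases hjm.eq_or_lt with rfl | hlt
    · exact (hf1 j).2.2.2
    · exact (hf2 j m hlt).2
  obtain ⟨ψ, hψ, w, hw, g, hg⟩ := h (fun n => (f n).2) (fun n => (hf1 n).2.2.1) (θ / 16)
    (by positivity)
  have hwφ : ∀ j n, |(f j).1 (w n) - (f j).1 (f (ψ n)).2| ≤ θ / 16 := by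
    intro j n
    rw [← map_sub, ← Real.norm_eq_abs]
    refine ((f j).1.le_opNorm _).trans ?_
    have := (hf1 j).1
    have := hw n
    nlinarith [norm_nonneg (w n - (f (ψ n)).2), norm_nonneg (f j).1]
  have hlow : ∀ j, 3 * θ / 16 ≤ (f j).1 g := by
    intro j
    have hsub : closure (convexHull ℝ (w '' Ici j)) ⊆ {z | 3 * θ / 16 ≤ (f j).1 z} := by
      refine closure_minimal (convexHull_min ?_ ?_) ?_
      · rintro _ ⟨n, hn, rfl⟩
        have h1 := abs_le.1 (hwφ j n)
        have h2 := hf3 j (ψ n) (le_trans hn hψ.le_apply)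
        simp only [mem_ofPred_eq]; linarith
      · exact convex_halfSpace_ge (f j).1.toLinearMap.isLinear _
      · exact isClosed_le continuous_const (f j).1.continuous
    exact hsub (hg j)
  obtain ⟨y, hy, hgy⟩ := Metric.mem_closure_iff.1 (hg 0) (θ / 16) (by positivity)
  have hup : convexHull ℝ (w '' Ici 0) ⊆ {z | ∀ᶠ j in atTop, (f j).1 z ≤ θ / 16} := by
    refine convexHull_min ?_ ?_
    · rintro _ ⟨n, -, rfl⟩
      filter_upwards [eventually_gt_atTop (ψ n)] with j hj
      have h1 := abs_le.1 (hwφ j n)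
      have h2 := (hf2 _ _ hj).1
      linarith
    · intro z hz z' hz' a b ha hb hab
      simp only [mem_ofPred_eq] at hz hz' ⊢
      filter_upwards [hz, hz'] with j h1 h2
      simp only [map_add, map_smul, smul_eq_mul]
      nlinarith
  obtain ⟨j, hj⟩ := (hup hy).exists
  have h1 := hlow j
  have h2 : |(f j).1 (g - y)| ≤ θ / 16 := by
    rw [← Real.norm_eq_abs]
    refine ((f j).1.le_opNorm _).trans ?_
    rw [dist_eq_norm] at hgy
    have := (hf1 j).1
    nlinarith [norm_nonneg (g - y), norm_nonneg (f j).1]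
  rw [map_sub] at h2
  have := abs_le.1 h2
  linarith

/-- A separable set admits a countable norming family of functionals. -/
theorem exists_seq_norming {Z : Type*} [NormedAddCommGroup Z] [NormedSpace ℝ Z] {s : Set Z}
    (hs : TopologicalSpace.IsSeparable s) :
    ∃ φ : ℕ → StrongDual ℝ Z, (∀ i, ‖φ i‖ ≤ 1) ∧ ∀ x ∈ s, ∀ ε : ℝ, 0 < ε →
      ∃ i, ‖x‖ - ε ≤ φ i x := by
  rcases s.eq_empty_or_nonempty with rfl | hne
  · exact ⟨0, by simp, by simp⟩
  obtain ⟨c, hc, hsc⟩ := hs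
  have hcne : c.Nonempty := by
    rw [← closure_nonempty_iff]
    exact hne.mono hsc
  obtain ⟨d, rfl⟩ := hc.exists_eq_range hcne
  choose φ hφ1 hφ2 using fun i => exists_dual_vector'' ℝ (d i)
  refine ⟨φ, hφ1, fun x hx ε hε => ?_⟩
  obtain ⟨_, ⟨i, rfl⟩, hi⟩ := Metric.mem_closure_iff.1 (hsc hx) (ε / 2) (by positivity)
  refine ⟨i, ?_⟩
  have h1 : ‖φ i (d i - x)‖ ≤ ‖d i - x‖ := by
    simpa using (φ i).le_of_opNorm_le (hφ1 i) (d i - x)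
  rw [dist_comm, dist_eq_norm] at hi
  have h2 := norm_sub_norm_le x (d i)
  rw [norm_sub_rev] at h2
  have h3 := (abs_le.1 (Real.norm_eq_abs _ ▸ h1)).2
  rw [map_sub, hφ2] at h3
  simp at h3
  linarith

theorem eq_of_norming {Z : Type*} [NormedAddCommGroup Z] [NormedSpace ℝ Z] (M : Submodule ℝ Z)
    {φ : ℕ → StrongDual ℝ Z} (h : ∀ x ∈ M, ∀ ε : ℝ, 0 < ε → ∃ i, ‖x‖ - ε ≤ φ i x)
    {x y : Z} (hx : x ∈ M) (hy : y ∈ M) (hxy : ∀ i, φ i x = φ i y) : x = y := by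
  rw [← sub_eq_zero, ← norm_le_zero_iff]
  refine le_of_forall_pos_le_add fun ε hε => ?_
  obtain ⟨i, hi⟩ := h _ (M.sub_mem hx hy) ε hε
  rw [map_sub, hxy i, sub_self] at hi
  linarith

/-- On weakly compact subsets of a separable subspace, convergence of a norming sequence of
functionals is weak convergence. -/
theorem isClosedEmbedding_norming {Z : Type*} [NormedAddCommGroup Z] [NormedSpace ℝ Z]
    (M : Submodule ℝ Z) {φ : ℕ → StrongDual ℝ Z}
    (h : ∀ x ∈ M, ∀ ε : ℝ, 0 < ε → ∃ i, ‖x‖ - ε ≤ φ i x)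
    {S : Set (WeakSpace ℝ Z)} (hS : IsCompact S) (hSM : S ⊆ toWeakSpace ℝ Z '' M) :
    IsClosedEmbedding (fun (x : S) (i : ℕ) => φ i ((toWeakSpace ℝ Z).symm x)) := by
  have := isCompact_iff_compactSpace.1 hS
  refine Continuous.isClosedEmbedding ?_ ?_
  · exact continuous_pi fun i => (continuous_weakSpace_dual (φ i)).comp continuous_subtype_val
  · rintro ⟨x, hx⟩ ⟨y, hy⟩ hxy
    obtain ⟨x', hx', rfl⟩ := hSM hx
    obtain ⟨y', hy', rfl⟩ := hSM hy
    have := eq_of_norming M h hx' hy' (fun i => by simpa using congrFun hxy i)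
    subst this
    rfl

theorem isSeparable_closure_span {Z : Type*} [NormedAddCommGroup Z] [NormedSpace ℝ Z]
    {s : Set Z} (hs : TopologicalSpace.IsSeparable s) :
    TopologicalSpace.IsSeparable ((Submodule.span ℝ s).topologicalClosure : Set Z) := by
  rw [Submodule.topologicalClosure_coe]
  exact (hs.span (R := ℝ)).closure

theorem IsRelWeaklyCompact.exists_subseq {Z : Type*} [NormedAddCommGroup Z] [NormedSpace ℝ Z]
    {K : Set Z} (hK : IsRelWeaklyCompact K) {u : ℕ → Z} (hu : ∀ n, u n ∈ K) :
    ∃ ψ : ℕ → ℕ, StrictMono ψ ∧ ∃ z : Z, ∀ φ : StrongDual ℝ Z,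
      Tendsto (fun n => φ (u (ψ n))) atTop (𝓝 (φ z)) := by
  let M := (Submodule.span ℝ (range u)).topologicalClosure
  have hM : TopologicalSpace.IsSeparable (M : Set Z) :=
    isSeparable_closure_span (countable_range u).isSeparable
  have huM : ∀ n, u n ∈ M := fun n =>
    (Submodule.le_topologicalClosure _) (Submodule.subset_span ⟨n, rfl⟩)
  obtain ⟨φ, -, hφ⟩ := exists_seq_norming hM
  let S := closure (toWeakSpace ℝ Z '' K) ∩ toWeakSpace ℝ Z '' M
  have hS : IsCompact S := IsCompact.inter_right hK
    (isClosed_image_toWeakSpace M.convex (Submodule.isClosed_topologicalClosure _))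
  have hemb := isClosedEmbedding_norming M hφ hS inter_subset_right
  have := isCompact_iff_compactSpace.1 hS
  have hmet : TopologicalSpace.MetrizableSpace S := hemb.isEmbedding.metrizableSpace
  let _ := TopologicalSpace.metrizableSpaceMetric S
  obtain ⟨⟨z, hz⟩, ψ, hψ, hlim⟩ := CompactSpace.tendsto_subseq
    (fun n => (⟨toWeakSpace ℝ Z (u n), subset_closure ⟨_, hu n, rfl⟩, ⟨_, huM n, rfl⟩⟩ : S))
  refine ⟨ψ, hψ, (toWeakSpace ℝ Z).symm z, weakTendsto_iff.1 ?_⟩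
  exact (continuous_subtype_val.tendsto _).comp hlim

/-- The inclusion of `L^p` into `L¹` over a probability space. -/
def lpToL1 (p : ℝ≥0∞) [hp : Fact (1 ≤ p)] (μ : Measure Ω) [IsProbabilityMeasure μ] :
    Lp X p μ →L[ℝ] Lp X 1 μ :=
  LinearMap.mkContinuous
    { toFun := fun f => ((Lp.memLp f).mono_exponent hp.out).toLp f
      map_add' := fun f g => by
        rw [← MemLp.toLp_add, MemLp.toLp_eq_toLp_iff]
        exact Lp.coeFn_add f g
      map_smul' := fun c f => by
        rw [RingHom.id_apply, ← MemLp.toLp_const_smul, MemLp.toLp_eq_toLp_iff]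
        exact Lp.coeFn_smul c f } 1 (fun f => by
      rw [one_mul]
      change ‖((Lp.memLp f).mono_exponent hp.out).toLp f‖ ≤ ‖f‖
      rw [Lp.norm_toLp, Lp.norm_def]
      exact ENNReal.toReal_mono (Lp.eLpNorm_ne_top f)
        (eLpNorm_le_eLpNorm_of_exponent_le hp.out (Lp.aestronglyMeasurable f)))

theorem coeFn_lpToL1 {p : ℝ≥0∞} [hp : Fact (1 ≤ p)] {μ : Measure Ω} [IsProbabilityMeasure μ]
    (f : Lp X p μ) : lpToL1 p μ f =ᵐ[μ] f :=
  ((Lp.memLp f).mono_exponent hp.out).coeFn_toLp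

theorem exists_dual_extension {M : Submodule ℝ X} (D : AddSubgroup M) (hD : Dense (D : Set M))
    {C : ℝ} (hC0 : 0 ≤ C) (γ : D → ℝ) (hadd : ∀ x y, γ (x + y) = γ x + γ y)
    (hC : ∀ x, |γ x| ≤ C * ‖(x : M)‖) :
    ∃ G : StrongDual ℝ X, ‖G‖ ≤ C ∧ ∀ x : D, G (x : M) = γ x := by
  let γ' : D →+ ℝ := ⟨⟨γ, by have := hadd 0 0; rw [add_zero] at this; linarith⟩, hadd⟩
  have hγ' : Continuous γ' := by
    refine AddMonoidHomClass.continuous_of_bound γ' C fun x => ?_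
    rw [Real.norm_eq_abs]
    exact hC x
  let f : D →L[ℤ] ℝ := ⟨γ'.toIntLinearMap, hγ'⟩
  let e : D →L[ℤ] M := ⟨D.subtype.toIntLinearMap, continuous_subtype_val⟩
  have he1 : DenseRange e := by
    have : range e = (D : Set M) := by
      ext x
      exact ⟨by rintro ⟨y, rfl⟩; exact y.2, fun h => ⟨⟨x, h⟩, rfl⟩⟩
    unfold DenseRange
    rwa [this]
  have he2 : IsUniformInducing e := isUniformEmbedding_subtype_val.isUniformInducing
  let h := f.extend e
  have hh : ∀ x : D, h x = γ x := fun x => f.extend_eq he1 he2 x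
  let h' : M →L[ℝ] ℝ := AddMonoidHom.toRealLinearMap h.toLinearMap.toAddMonoidHom h.continuous
  have hh' : ∀ x, ‖h' x‖ ≤ C * ‖x‖ := by
    refine fun x => hD.induction (P := fun x => ‖h' x‖ ≤ C * ‖x‖) (fun y hy => ?_) ?_ x
    · have : h' y = γ ⟨y, hy⟩ := hh ⟨y, hy⟩
      rw [this, Real.norm_eq_abs]
      exact hC _
    · exact isClosed_le h'.continuous.norm (continuous_const.mul continuous_norm)
  obtain ⟨G, hG, hG2⟩ := exists_extension_norm_eq M h'
  exact ⟨G, hG2.trans_le (h'.opNorm_le_bound hC0 hh'), fun x => (hG x).trans (hh x)⟩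

/-- Densities of the vector measures `A ↦ Φ (indicator A x)`. -/
theorem exists_density {μ : Measure Ω} [IsProbabilityMeasure μ] (Φ : StrongDual ℝ (Lp X 1 μ)) :
    ∃ g : X → Ω → ℝ, (∀ x, Integrable (g x) μ) ∧
      (∀ x (A : Set Ω) (hA : MeasurableSet A),
        Φ (indicatorConstLp 1 hA (measure_ne_top μ A) x) = ∫ ω in A, g x ω ∂μ) ∧
      (∀ x y, ∀ᵐ ω ∂μ, g (x + y) ω = g x ω + g y ω) ∧
      ∀ x, ∀ᵐ ω ∂μ, |g x ω| ≤ ‖Φ‖ * ‖x‖ := by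
  let T : X → StrongDual ℝ (Lp ℝ 2 μ) := fun x =>
    Φ ∘L ((ContinuousLinearMap.toSpanSingleton ℝ x).compLpL 1 μ) ∘L lpToL1 2 μ
  let g : X → Lp ℝ 2 μ := fun x => (InnerProductSpace.toDual ℝ (Lp ℝ 2 μ)).symm (T x)
  have hint : ∀ x, Integrable (g x) μ := fun x =>
    memLp_one_iff_integrable.1 ((Lp.memLp (g x)).mono_exponent Fact.out)
  have hΦ : ∀ x (A : Set Ω) (hA : MeasurableSet A),
      Φ (indicatorConstLp 1 hA (measure_ne_top μ A) x) = ∫ ω in A, g x ω ∂μ := by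
    intro x A hA
    rw [← L2.inner_indicatorConstLp_one (𝕜 := ℝ) hA (measure_ne_top μ A) (g x),
      real_inner_comm, InnerProductSpace.toDual_symm_apply]
    change _ = Φ _
    congr 1
    refine Lp.ext ?_
    filter_upwards [indicatorConstLp_coeFn (p := 1) (hs := hA) (hμs := measure_ne_top μ A) (c := x),
      indicatorConstLp_coeFn (p := 2) (hs := hA) (hμs := measure_ne_top μ A) (c := (1 : ℝ)),
      coeFn_lpToL1 (indicatorConstLp 2 hA (measure_ne_top μ A) (1 : ℝ)),
      ContinuousLinearMap.coeFn_compLpL (p := 1) (ContinuousLinearMap.toSpanSingleton ℝ x)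
        (lpToL1 2 μ (indicatorConstLp 2 hA (measure_ne_top μ A) (1 : ℝ)))] with ω h1 h2 h3 h4
    rw [h1]
    refine Eq.trans ?_ h4.symm
    rw [h3, h2]
    by_cases hω : ω ∈ A <;> simp [hω]
  refine ⟨fun x => g x, hint, hΦ, fun x y => ?_, fun x => ?_⟩
  · have hT : T (x + y) = T x + T y := by
      ext h
      simp only [T, ContinuousLinearMap.comp_apply, add_apply, ← map_add]
      congr 1
      refine Lp.ext ?_
      filter_upwards [ContinuousLinearMap.coeFn_compLpL (p := 1)
          (ContinuousLinearMap.toSpanSingleton ℝ x) (lpToL1 2 μ h),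
        ContinuousLinearMap.coeFn_compLpL (p := 1)
          (ContinuousLinearMap.toSpanSingleton ℝ y) (lpToL1 2 μ h),
        ContinuousLinearMap.coeFn_compLpL (p := 1)
          (ContinuousLinearMap.toSpanSingleton ℝ (x + y)) (lpToL1 2 μ h),
        Lp.coeFn_add ((ContinuousLinearMap.toSpanSingleton ℝ x).compLpL 1 μ (lpToL1 2 μ h))
          ((ContinuousLinearMap.toSpanSingleton ℝ y).compLpL 1 μ (lpToL1 2 μ h))]
        with ω h1 h2 h3 h4
      rw [h3, h4, Pi.add_apply, h1, h2]
      simp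
    have : g (x + y) = g x + g y := by simp only [g, hT, map_add]
    beta_reduce
    rw [this]
    exact Lp.coeFn_add _ _
  · have hb : ∀ A : Set Ω, MeasurableSet A → |∫ ω in A, g x ω ∂μ| ≤ ‖Φ‖ * ‖x‖ * μ.real A := by
      intro A hA
      rw [← hΦ x A hA, ← Real.norm_eq_abs]
      refine (Φ.le_opNorm _).trans ?_
      rw [norm_indicatorConstLp one_ne_zero ENNReal.one_ne_top]
      simp [mul_assoc]
    have h1 : (g x : Ω → ℝ) ≤ᵐ[μ] fun _ => ‖Φ‖ * ‖x‖ := by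
      refine ae_le_of_forall_setIntegral_le (hint x) (integrable_const _) fun A hA _ => ?_
      rw [setIntegral_const, smul_eq_mul, mul_comm]
      exact (le_abs_self _).trans (hb A hA)
    have h2 : (fun ω => -(‖Φ‖ * ‖x‖)) ≤ᵐ[μ] g x := by
      refine ae_le_of_forall_setIntegral_le (integrable_const _) (hint x) fun A hA _ => ?_
      rw [setIntegral_const, smul_eq_mul]
      have := (abs_le.1 (hb A hA)).1
      linarith
    filter_upwards [h1, h2] with ω h1 h2 using abs_le.2 ⟨h2, h1⟩

theorem exists_countable_dense_addSubgroup (M : Type*) [NormedAddCommGroup M]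
    [TopologicalSpace.SeparableSpace M] :
    ∃ D : AddSubgroup M, (D : Set M).Countable ∧ Dense (D : Set M) := by
  obtain ⟨c, hc, hcd⟩ := TopologicalSpace.exists_countable_dense M
  have : Countable c := hc
  refine ⟨(LinearMap.range (Finsupp.linearCombination ℤ (Subtype.val : c → M))).toAddSubgroup,
    countable_range _, hcd.mono ?_⟩
  intro x hx
  exact ⟨Finsupp.single ⟨x, hx⟩ 1, by simp⟩

theorem toLp_simpleFunc {μ : Measure Ω} [IsProbabilityMeasure μ] (s : SimpleFunc Ω X)
    (hs : MemLp s 1 μ) :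
    hs.toLp s = ∑ x ∈ s.range,
      indicatorConstLp 1 (s.measurableSet_fiber x) (measure_ne_top μ _) x := by
  classical
  refine Lp.ext ?_
  refine hs.coeFn_toLp.trans ?_
  refine EventuallyEq.trans ?_ (Lp.coeFn_finsetSum _ _).symm
  have : ∀ᵐ ω ∂μ, ∀ x ∈ s.range,
      indicatorConstLp 1 (s.measurableSet_fiber x) (measure_ne_top μ _) x ω =
        (s ⁻¹' {x}).indicator (fun _ => x) ω := by
    rw [Filter.eventually_all_finset]
    exact fun x _ => indicatorConstLp_coeFn
  filter_upwards [this] with ω hω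
  rw [Finset.sum_apply, Finset.sum_congr rfl (fun x hx => hω x hx), Finset.sum_eq_single (s ω)]
  · simp
  · intro x _ hx
    simp [hx.symm]
  · intro h
    exact absurd (s.mem_range_self ω) h

/-- On functions with values in a separable subspace, a functional on `L¹(μ,X)` is given by
integration against a family of functionals on `X`. -/
theorem exists_representation {μ : Measure Ω} [IsProbabilityMeasure μ]
    (Φ : StrongDual ℝ (Lp X 1 μ)) {M : Submodule ℝ X}
    (hM : TopologicalSpace.IsSeparable (M : Set X)) :
    ∃ G : Ω → StrongDual ℝ X, (∀ ω, ‖G ω‖ ≤ ‖Φ‖) ∧ ∀ u : Ω → X, StronglyMeasurable u →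
      (∀ ω, u ω ∈ M) → ∀ hu : MemLp u 1 μ,
        Integrable (fun ω => G ω (u ω)) μ ∧ Φ (hu.toLp u) = ∫ ω, G ω (u ω) ∂μ := by
  classical
  obtain ⟨g, hgi, hgΦ, hgadd, hgb⟩ := exists_density Φ
  have : TopologicalSpace.SeparableSpace M := hM.separableSpace
  obtain ⟨D, hDc, hDd⟩ := exists_countable_dense_addSubgroup M
  have : Countable D := hDc
  have hgood : ∀ᵐ ω ∂μ, (∀ x y : D, g ((x + y : D) : M) ω = g (x : M) ω + g (y : M) ω) ∧
      ∀ x : D, |g (x : M) ω| ≤ ‖Φ‖ * ‖(x : M)‖ := by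
    refine Filter.Eventually.and ?_ ?_
    · simp only [ae_all_iff]
      intro x y
      simpa using hgadd (x : M) (y : M)
    · simp only [ae_all_iff]
      exact fun x => hgb (x : M)
  have hG : ∀ ω, ∃ G : StrongDual ℝ X, ‖G‖ ≤ ‖Φ‖ ∧
      (((∀ x y : D, g ((x + y : D) : M) ω = g (x : M) ω + g (y : M) ω) ∧
      ∀ x : D, |g (x : M) ω| ≤ ‖Φ‖ * ‖(x : M)‖) → ∀ x : D, G (x : M) = g (x : M) ω) := by
    intro ω
    by_cases h : (∀ x y : D, g ((x + y : D) : M) ω = g (x : M) ω + g (y : M) ω) ∧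
      ∀ x : D, |g (x : M) ω| ≤ ‖Φ‖ * ‖(x : M)‖
    · obtain ⟨G, hG1, hG2⟩ := exists_dual_extension D hDd (norm_nonneg Φ)
        (fun x : D => g (x : M) ω) h.1 h.2
      exact ⟨G, hG1, fun _ => hG2⟩
    · exact ⟨0, by simp, fun h' => absurd h' h⟩
  choose G hG1 hG2 using hG
  refine ⟨G, hG1, fun u hum huM hu => ?_⟩
  borelize X
  let D' : Set X := (fun x : M => (x : X)) '' (D : Set M)
  have hD'c : D'.Countable := hDc.image _
  have : TopologicalSpace.SeparableSpace D' := hD'c.isSeparable.separableSpace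
  have h0 : (0 : X) ∈ D' := ⟨0, D.zero_mem, rfl⟩
  have hcl : ∀ ω, u ω ∈ closure D' := fun ω =>
    image_closure_subset_closure_image continuous_subtype_val
      ⟨⟨u ω, huM ω⟩, by rw [hDd.closure_eq]; trivial, rfl⟩
  let s : ℕ → SimpleFunc Ω X := SimpleFunc.approxOn u hum.measurable D' 0 h0
  have hsD : ∀ k ω, s k ω ∈ D' := fun k ω => SimpleFunc.approxOn_mem _ _ _ _
  have hlim : ∀ ω, Tendsto (fun k => s k ω) atTop (𝓝 (u ω)) := fun ω =>
    SimpleFunc.tendsto_approxOn hum.measurable h0 (hcl ω)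
  have hsb : ∀ k ω, ‖s k ω‖ ≤ ‖u ω‖ + ‖u ω‖ := fun k ω =>
    SimpleFunc.norm_approxOn_zero_le hum.measurable h0 ω k
  have hsL : ∀ k, MemLp (s k) 1 μ := fun k => SimpleFunc.memLp_of_isFiniteMeasure _ _ _
  have hGs : ∀ k, (fun ω => G ω (s k ω)) =ᵐ[μ]
      fun ω => ∑ x ∈ (s k).range, (s k ⁻¹' {x}).indicator (g x) ω := by
    intro k
    filter_upwards [hgood] with ω hω
    obtain ⟨d, hd, hd2⟩ := hsD k ω
    rw [Finset.sum_eq_single (s k ω)]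
    · rw [← hd2, hG2 ω hω ⟨d, hd⟩, indicator_of_mem]
      exact hd2.symm
    · intro x _ hx
      simp [hx.symm]
    · intro h
      exact absurd ((s k).mem_range_self ω) h
  have hint : ∀ k x, Integrable ((s k ⁻¹' {x}).indicator (g x)) μ := fun k x =>
    (hgi x).indicator ((s k).measurableSet_fiber x)
  have hGm : ∀ k, AEStronglyMeasurable (fun ω => G ω (s k ω)) μ := fun k =>
    (integrable_finsetSum _ fun x _ => hint k x).aestronglyMeasurable.congr (hGs k).symm
  have hΦs : ∀ k, Φ ((hsL k).toLp (s k)) = ∫ ω, G ω (s k ω) ∂μ := by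
    intro k
    rw [toLp_simpleFunc, map_sum, integral_congr_ae (hGs k),
      integral_finsetSum _ fun x _ => hint k x]
    refine Finset.sum_congr rfl fun x _ => ?_
    rw [hgΦ, integral_indicator ((s k).measurableSet_fiber x)]
  have hGlim : ∀ ω, Tendsto (fun k => G ω (s k ω)) atTop (𝓝 (G ω (u ω))) := fun ω =>
    ((G ω).continuous.tendsto _).comp (hlim ω)
  have hui : Integrable u μ := memLp_one_iff_integrable.1 hu
  have hum' : AEStronglyMeasurable (fun ω => G ω (u ω)) μ :=
    aestronglyMeasurable_of_tendsto_ae atTop hGm (ae_of_all _ hGlim)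
  refine ⟨(hui.norm.const_mul ‖Φ‖).mono' hum' (ae_of_all _ fun ω =>
    (G ω).le_of_opNorm_le (hG1 ω) _), ?_⟩
  have t1 : Tendsto (fun k => ∫ ω, G ω (s k ω) ∂μ) atTop (𝓝 (∫ ω, G ω (u ω) ∂μ)) := by
    refine tendsto_integral_of_dominated_convergence (fun ω => ‖Φ‖ * (‖u ω‖ + ‖u ω‖)) hGm
      ((hui.norm.add hui.norm).const_mul _) (fun k => ae_of_all _ fun ω => ?_)
      (ae_of_all _ hGlim)
    exact ((G ω).le_of_opNorm_le (hG1 ω) _).trans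
      (mul_le_mul_of_nonneg_left (hsb k ω) (norm_nonneg _))
  have t2 : Tendsto (fun k => (hsL k).toLp (s k)) atTop (𝓝 (hu.toLp u)) := by
    rw [Lp.tendsto_Lp_iff_tendsto_eLpNorm'']
    refine SimpleFunc.tendsto_approxOn_Lp_eLpNorm hum.measurable h0 one_ne_top
      (ae_of_all _ hcl) ?_
    simpa using hu.2
  have t3 := (Φ.continuous.tendsto _).comp t2
  refine tendsto_nhds_unique t3 ?_
  simpa only [Function.comp_def, hΦs] using t1

/-- The convex hull of a set of functions, evaluated after passing to `L^p`. -/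
theorem convexHull_toLp_subset {μ : Measure Ω} [IsProbabilityMeasure μ] {p : ℝ≥0∞}
    [Fact (1 ≤ p)] {u : ℕ → Ω → X} (hu : ∀ n, MemLp (u n) p μ) (s : Set ℕ) {y : Lp X p μ}
    (hy : y ∈ convexHull ℝ ((fun n => (hu n).toLp (u n)) '' s)) :
    ∃ v ∈ convexHull ℝ (u '' s), y =ᵐ[μ] v := by
  refine convexHull_min (s := (fun n => (hu n).toLp (u n)) '' s)
    (t := {y : Lp X p μ | ∃ v ∈ convexHull ℝ (u '' s), y =ᵐ[μ] v}) ?_ ?_ hy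
  · rintro _ ⟨n, hn, rfl⟩
    exact ⟨u n, subset_convexHull ℝ _ ⟨n, hn, rfl⟩, (hu n).coeFn_toLp⟩
  · rintro y ⟨v, hv, hyv⟩ y' ⟨v', hv', hyv'⟩ a b ha hb hab
    refine ⟨a • v + b • v', convex_convexHull ℝ _ hv hv' ha hb hab, ?_⟩
    filter_upwards [hyv, hyv', Lp.coeFn_add (a • y) (b • y'), Lp.coeFn_smul a y,
      Lp.coeFn_smul b y'] with ω h1 h2 h3 h4 h5
    refine h3.trans ?_
    rw [Pi.add_apply, h4, h5, Pi.smul_apply, Pi.smul_apply, h1, h2]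
    rfl

/-- A bounded sequence of functions that is pointwise weakly null has convex combinations which
are small in mean. -/
theorem exists_convexHull_integral_lt {μ : Measure Ω} [IsProbabilityMeasure μ] {u : ℕ → Ω → X}
    (hm : ∀ n, StronglyMeasurable (u n)) {C : ℝ} (hC : ∀ n ω, ‖u n ω‖ ≤ C)
    (h : ∀ᵐ ω ∂μ, ∀ φ : StrongDual ℝ X, Tendsto (fun n => φ (u n ω)) atTop (𝓝 0))
    (n : ℕ) {ε : ℝ} (hε : 0 < ε) :
    ∃ v ∈ convexHull ℝ (u '' Ici n), ∫ ω, ‖v ω‖ ∂μ < ε := by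
  have hL : ∀ n, MemLp (u n) 1 μ := fun n =>
    MemLp.of_bound (hm n).aestronglyMeasurable C (ae_of_all _ (hC n))
  have hweak : ∀ Φ : StrongDual ℝ (Lp X 1 μ),
      Tendsto (fun n => Φ ((hL n).toLp (u n))) atTop (𝓝 0) := by
    intro Φ
    obtain ⟨G, hG, hG2⟩ := exists_representation Φ
      (isSeparable_closure_span (TopologicalSpace.IsSeparable.iUnion
        fun n => (hm n).isSeparable_range))
    have hmem : ∀ n ω, u n ω ∈
        (Submodule.span ℝ (⋃ n, range (u n))).topologicalClosure := fun n ω =>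
      (Submodule.le_topologicalClosure _)
        (Submodule.subset_span (mem_iUnion.2 ⟨n, mem_range_self ω⟩))
    simp only [fun n => (hG2 (u n) (hm n) (hmem n) (hL n)).2]
    rw [← integral_zero Ω ℝ (μ := μ)]
    refine tendsto_integral_of_dominated_convergence (fun _ => ‖Φ‖ * C)
      (fun n => (hG2 (u n) (hm n) (hmem n) (hL n)).1.aestronglyMeasurable)
      (integrable_const _) (fun n => ae_of_all _ fun ω => ?_) ?_
    · exact ((G ω).le_of_opNorm_le (hG ω) _).trans
        (mul_le_mul_of_nonneg_left (hC n ω) (norm_nonneg _))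
    · filter_upwards [h] with ω hω using hω (G ω)
  obtain ⟨y, hy, hy2⟩ := exists_mem_convexHull_norm_lt hweak n hε
  obtain ⟨v, hv, hyv⟩ := convexHull_toLp_subset hL _ hy
  refine ⟨v, hv, ?_⟩
  have hvy : ∫ ω, ‖v ω‖ ∂μ = ∫ ω, ‖y ω‖ ∂μ :=
    integral_congr_ae (by filter_upwards [hyv] with ω hω; rw [hω])
  rw [hvy, ← L1.norm_eq_integral_norm]
  exact hy2

/-- On a separable set, a map into a normed space is strongly measurable as soon as the preimages
of closed balls are measurable. -/
theorem stronglyMeasurable_of_closedBall {α Z : Type*} [MeasurableSpace α] [NormedAddCommGroup Z]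
    {f : α → Z} {s : Set Z} (hs : TopologicalSpace.IsSeparable s) (hf : ∀ a, f a ∈ s)
    (h : ∀ x ∈ s, ∀ r : ℝ, MeasurableSet (f ⁻¹' Metric.closedBall x r)) :
    StronglyMeasurable f := by
  borelize Z
  refine stronglyMeasurable_iff_measurable_separable.2 ⟨?_, hs.mono (range_subset_iff.2 hf)⟩
  obtain ⟨c, hcs', hc, hcs⟩ := hs.exists_countable_dense_subset
  refine measurable_of_isOpen fun U hU => ?_
  have : f ⁻¹' U = ⋃ d ∈ c, ⋃ k ∈ {k : ℕ | Metric.closedBall d (1 / ((k : ℝ) + 1)) ⊆ U},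
      f ⁻¹' Metric.closedBall d (1 / ((k : ℝ) + 1)) := by
    ext a
    simp only [mem_preimage, mem_iUnion, exists_prop]
    constructor
    · intro ha
      obtain ⟨ε, hε, hεU⟩ := Metric.isOpen_iff.1 hU _ ha
      obtain ⟨k, hk⟩ := exists_nat_one_div_lt (half_pos hε)
      obtain ⟨d, hd, hda⟩ := Metric.mem_closure_iff.1 (hcs (hf a))
        (1 / ((k : ℝ) + 1)) (by positivity)
      refine ⟨d, hd, k, fun y hy => hεU ?_, hda.le⟩
      rw [Metric.mem_closedBall] at hy
      rw [Metric.mem_ball]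
      have := dist_triangle y d (f a)
      rw [dist_comm d] at this
      linarith
    · rintro ⟨d, -, k, hk, ha⟩
      exact hk ha
  rw [this]
  exact MeasurableSet.biUnion hc fun d hd => MeasurableSet.biUnion (to_countable _)
    fun k _ => h d (hcs' hd) _

/-- The Krein–Šmulian theorem for subsets of separable subspaces. -/
theorem IsWeaklyCompact.closure_convexHull {Z : Type*} [NormedAddCommGroup Z] [NormedSpace ℝ Z]
    [CompleteSpace Z] {W : Set Z} (hW : IsWeaklyCompact W)
    (hs : TopologicalSpace.IsSeparable W) : IsWeaklyCompact (closure (convexHull ℝ W)) := by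
  let M := (Submodule.span ℝ W).topologicalClosure
  have hM : TopologicalSpace.IsSeparable (M : Set Z) := isSeparable_closure_span hs
  have hWM : W ⊆ M := fun x hx => (Submodule.le_topologicalClosure _) (Submodule.subset_span hx)
  obtain ⟨φ, -, hφ⟩ := exists_seq_norming hM
  let S := toWeakSpace ℝ Z '' W
  have hS : IsCompact S := hW
  have hemb := isClosedEmbedding_norming M hφ hS (image_mono hWM)
  have := isCompact_iff_compactSpace.1 hS
  have hmet : TopologicalSpace.MetrizableSpace S := hemb.isEmbedding.metrizableSpace
  let _ : MeasurableSpace S := borel S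
  have : BorelSpace S := ⟨rfl⟩
  let τ : S → Z := fun x => (toWeakSpace ℝ Z).symm x
  have hτW : ∀ x, τ x ∈ W := by
    rintro ⟨_, w, hw, rfl⟩
    simpa [τ] using hw
  have hτm : StronglyMeasurable τ := by
    refine stronglyMeasurable_of_closedBall hs hτW fun x _ r => ?_
    have h1 : τ ⁻¹' Metric.closedBall x r =
        Subtype.val ⁻¹' (toWeakSpace ℝ Z '' Metric.closedBall x r) := by
      ext a
      constructor
      · intro ha
        exact ⟨τ a, ha, by simp [τ]⟩
      · rintro ⟨y, hy, hya⟩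
        simpa [τ, ← hya] using hy
    rw [h1]
    exact ((isClosed_image_toWeakSpace (convex_closedBall x r)
      Metric.isClosed_closedBall).preimage continuous_subtype_val).measurableSet
  obtain ⟨C, hC⟩ := IsRelWeaklyCompact.exists_norm_le (K := W) hS.closure
  have hτi : ∀ m : Measure S, IsFiniteMeasure m → Integrable τ m := fun m _ =>
    Integrable.of_bound hτm.aestronglyMeasurable C (ae_of_all _ fun x => hC _ (hτW x))
  let b : ProbabilityMeasure S → Z := fun m => ∫ x, τ x ∂(m : Measure S)
  have hb : Continuous fun m => toWeakSpace ℝ Z (b m) := by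
    refine continuous_iff_continuousAt.2 fun m => weakTendsto_iff.2 fun ψ => ?_
    have hψ : ∀ m : ProbabilityMeasure S, ψ (b m) = ∫ x, ψ (τ x) ∂(m : Measure S) := fun m =>
      (ψ.integral_comp_comm (hτi _ inferInstance)).symm
    simp only [hψ]
    exact (ProbabilityMeasure.continuous_integral_continuousMap
      (⟨fun x => ψ (τ x), (continuous_weakSpace_dual ψ).comp continuous_subtype_val⟩ :
        C(S, ℝ))).tendsto m
  have hcpt : IsCompact (toWeakSpace ℝ Z '' range b) := by
    rw [← range_comp]
    exact isCompact_range hb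
  have hconv : Convex ℝ (range b) := by
    rintro _ ⟨m, rfl⟩ _ ⟨m', rfl⟩ s t hs0 ht0 hst
    refine ⟨⟨ENNReal.ofReal s • (m : Measure S) + ENNReal.ofReal t • (m' : Measure S), ⟨?_⟩⟩, ?_⟩
    · simp [← ENNReal.ofReal_add hs0 ht0, hst]
    · change ∫ x, τ x ∂(ENNReal.ofReal s • (m : Measure S) +
        ENNReal.ofReal t • (m' : Measure S)) = _
      rw [integral_add_measure, integral_smul_measure, integral_smul_measure,
        ENNReal.toReal_ofReal hs0, ENNReal.toReal_ofReal ht0]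
      · exact (hτi _ inferInstance).smul_measure ofReal_ne_top
      · exact (hτi _ inferInstance).smul_measure ofReal_ne_top
  have hsub : convexHull ℝ W ⊆ range b := by
    refine convexHull_min (fun w hw => ?_) hconv
    refine ⟨⟨Measure.dirac ⟨toWeakSpace ℝ Z w, w, hw, rfl⟩, inferInstance⟩, ?_⟩
    change ∫ x, τ x ∂(Measure.dirac _) = w
    rw [integral_dirac]
    simp [τ]
  have hcl : IsClosed (range b) := by
    have h1 : IsClosed (toWeakSpace ℝ Z '' range b) := hcpt.isClosed
    have h2 := h1.preimage (toWeakSpaceCLM ℝ Z).continuous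
    convert h2 using 1
    exact ((toWeakSpace ℝ Z).injective.preimage_image _).symm
  refine hcpt.of_isClosed_subset (isClosed_image_toWeakSpace (convex_convexHull ℝ W).closure
    isClosed_closure) (image_mono (closure_minimal hsub hcl))

/-- A bounded sequence in a Hilbert space has convex combinations of tails which converge. -/
theorem exists_convexHull_tendsto {H : Type*} [NormedAddCommGroup H] [InnerProductSpace ℝ H]
    [CompleteSpace H] {u : ℕ → H} {C : ℝ} (hC : ∀ n, ‖u n‖ ≤ C) :
    ∃ (v : ℕ → H) (h : H), (∀ n, v n ∈ convexHull ℝ (u '' Ici n)) ∧ Tendsto v atTop (𝓝 h) := by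
  have hne : ∀ n, (convexHull ℝ (u '' Ici n)).Nonempty := fun n =>
    ⟨u n, subset_convexHull ℝ _ ⟨n, mem_Ici.2 le_rfl, rfl⟩⟩
  have hanti : ∀ {m n}, m ≤ n → convexHull ℝ (u '' Ici n) ⊆ convexHull ℝ (u '' Ici m) :=
    fun h => convexHull_mono (image_mono (Ici_subset_Ici.2 h))
  let d : ℕ → ℝ := fun n => Metric.infDist 0 (convexHull ℝ (u '' Ici n))
  have hdle : ∀ n, ∀ y ∈ convexHull ℝ (u '' Ici n), d n ≤ ‖y‖ := fun n y hy => by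
    simpa using Metric.infDist_le_dist_of_mem (x := (0 : H)) hy
  have hdmono : Monotone d := fun m n h => Metric.infDist_le_infDist_of_subset (hanti h) (hne n)
  have hdC : ∀ n, d n ≤ C := fun n =>
    (hdle n (u n) (subset_convexHull ℝ _ ⟨n, mem_Ici.2 le_rfl, rfl⟩)).trans (hC n)
  have hd0 : ∀ n, 0 ≤ d n := fun n => Metric.infDist_nonneg
  have hex : ∀ n : ℕ, ∃ y ∈ convexHull ℝ (u '' Ici n), ‖y‖ < d n + 1 / ((n : ℝ) + 1) := by
    intro n
    obtain ⟨y, hy, h⟩ := (Metric.infDist_lt_iff (hne n)).1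
      (lt_add_of_pos_right (d n) (by positivity : (0 : ℝ) < 1 / ((n : ℝ) + 1)))
    exact ⟨y, hy, by simpa using h⟩
  choose v hv hv2 using hex
  obtain ⟨D, hD⟩ : ∃ D, Tendsto d atTop (𝓝 D) :=
    ⟨_, tendsto_atTop_ciSup hdmono ⟨C, by rintro _ ⟨n, rfl⟩; exact hdC n⟩⟩
  have hdD : ∀ n, d n ≤ D := hdmono.ge_of_tendsto hD
  have hlim : Tendsto (fun n : ℕ => ((D + 1 / ((n : ℝ) + 1)) ^ 2 - d n ^ 2) * 4) atTop (𝓝 0) := by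
    have := (((tendsto_const_nhds (x := D)).add tendsto_one_div_add_atTop_nhds_zero_nat).pow 2).sub
      (hD.pow 2)
    simpa using this.mul_const 4
  have hest : ∀ n m : ℕ, n ≤ m → ‖v n - v m‖ ^ 2 ≤ ((D + 1 / ((n : ℝ) + 1)) ^ 2 - d n ^ 2) * 4 := by
    intro n m hnm
    have h1 : d n ≤ ‖(1 / 2 : ℝ) • v n + (1 / 2 : ℝ) • v m‖ :=
      hdle n _ (convex_convexHull ℝ _ (hv n) (hanti hnm (hv m)) (by norm_num) (by norm_num)
        (by norm_num))
    rw [← smul_add, norm_smul] at h1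
    norm_num at h1
    have h2 := parallelogram_law_with_norm ℝ (v n) (v m)
    have h3 : (1 : ℝ) / ((m : ℝ) + 1) ≤ 1 / ((n : ℝ) + 1) := by
      have : (n : ℝ) ≤ m := by exact_mod_cast hnm
      gcongr
    have h4 : ‖v n‖ ≤ D + 1 / ((n : ℝ) + 1) := (hv2 n).le.trans (by linarith [hdD n])
    have h5 : ‖v m‖ ≤ D + 1 / ((n : ℝ) + 1) := (hv2 m).le.trans (by linarith [hdD m])
    have h6 : ‖v n‖ ^ 2 ≤ (D + 1 / ((n : ℝ) + 1)) ^ 2 := by gcongr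
    have h7 : ‖v m‖ ^ 2 ≤ (D + 1 / ((n : ℝ) + 1)) ^ 2 := by gcongr
    have h8 : d n ^ 2 ≤ (1 / 2 * ‖v n + v m‖) ^ 2 := by
      have := hd0 n
      gcongr
    nlinarith
  have hcau : CauchySeq v := by
    refine Metric.cauchySeq_iff'.2 fun ε hε => ?_
    obtain ⟨N, hN⟩ := (hlim.eventually_lt_const (sq_pos_of_pos hε)).exists
    refine ⟨N, fun n hn => ?_⟩
    rw [dist_comm, dist_eq_norm]
    exact lt_of_pow_lt_pow_left₀ 2 hε.le ((hest N n hn).trans_lt hN)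
  obtain ⟨h, hh⟩ := cauchySeq_tendsto_of_complete hcau
  exact ⟨v, h, hv, hh⟩

/-- The integers with the norm taking the value `1` at every nonzero integer. -/
def DiscInt : Type := ℤ

instance : DecidableEq DiscInt := inferInstanceAs (DecidableEq ℤ)

instance : NormedAddCommGroup DiscInt := (1 : AddGroupNorm ℤ).toNormedAddCommGroup

theorem DiscInt.norm_def (i : DiscInt) : ‖i‖ = if i = 0 then 0 else 1 := rfl

theorem DiscInt.norm_le_one (i : DiscInt) : ‖i‖ ≤ 1 := by
  rw [DiscInt.norm_def]
  split_ifs <;> norm_num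

theorem DiscInt.one_le_norm (i : DiscInt) (hi : i ≠ 0) : 1 ≤ ‖i‖ := by
  rw [DiscInt.norm_def, if_neg hi]

instance : DiscreteTopology DiscInt :=
  DiscreteTopology.of_forall_le_norm one_pos DiscInt.one_le_norm

instance : CompleteSpace DiscInt := by
  refine Metric.complete_of_cauchySeq_tendsto fun u hu => ?_
  obtain ⟨N, hN⟩ := Metric.cauchySeq_iff'.1 hu 1 one_pos
  refine ⟨u N, tendsto_const_nhds.congr' ?_⟩
  filter_upwards [eventually_ge_atTop N] with n hn
  by_contra h
  have h1 := hN n hn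
  rw [dist_eq_norm] at h1
  exact absurd (DiscInt.one_le_norm (u n - u N) (sub_ne_zero.2 (Ne.symm h))) (not_le.2 h1)

theorem aestronglyMeasurable_selection {μ : Measure Ω} (G : DiscInt → StrongDual ℝ X)
    {θ : Ω → DiscInt} (hθ : AEStronglyMeasurable θ μ) {f : Ω → X}
    (hf : AEStronglyMeasurable f μ) : AEStronglyMeasurable (fun ω => G (θ ω) (f ω)) μ :=
  isBoundedBilinearMap_apply.continuous.comp_aestronglyMeasurable
    (((continuous_of_discreteTopology (f := G)).comp_aestronglyMeasurable hθ).prodMk hf)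

/-- Integration against a measurable selection from a sequence of functionals. -/
theorem exists_selection_functional {μ : Measure Ω} {G : DiscInt → StrongDual ℝ X}
    (hG : ∀ i, ‖G i‖ ≤ 1) {θ : Ω → DiscInt} (hθ : AEStronglyMeasurable θ μ) :
    ∃ Φ : StrongDual ℝ (Lp X 1 μ), ∀ f : Lp X 1 μ, Φ f = ∫ ω, G (θ ω) (f ω) ∂μ := by
  have hle : ∀ (f : Lp X 1 μ) ω, ‖G (θ ω) (f ω)‖ ≤ ‖f ω‖ := fun f ω => by
    simpa using (G (θ ω)).le_of_opNorm_le (hG _) (f ω)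
  have hi : ∀ f : Lp X 1 μ, Integrable (fun ω => G (θ ω) (f ω)) μ := fun f =>
    (L1.integrable_coeFn f).norm.mono' (aestronglyMeasurable_selection G hθ
      (Lp.aestronglyMeasurable f)) (ae_of_all _ (hle f))
  refine ⟨LinearMap.mkContinuous ⟨⟨fun f => ∫ ω, G (θ ω) (f ω) ∂μ, fun f g => ?_⟩,
    fun c f => ?_⟩ 1 fun f => ?_, fun f => rfl⟩
  · rw [← integral_add (hi f) (hi g)]
    refine integral_congr_ae ?_
    filter_upwards [Lp.coeFn_add f g] with ω h
    rw [h, Pi.add_apply, map_add]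
  · change _ = c • _
    rw [← integral_smul]
    refine integral_congr_ae ?_
    filter_upwards [Lp.coeFn_smul c f] with ω h
    rw [h, Pi.smul_apply, map_smul]
  · change ‖∫ ω, G (θ ω) (f ω) ∂μ‖ ≤ _
    rw [one_mul, L1.norm_eq_integral_norm]
    exact norm_integral_le_of_norm_le (L1.integrable_coeFn f).norm (ae_of_all _ (hle f))

theorem continuous_selection {μ : Measure Ω} {G : DiscInt → StrongDual ℝ X}
    (hG : ∀ i, ‖G i‖ ≤ 1) (f : Lp X 1 μ) :
    Continuous fun θ : Lp DiscInt 1 μ => ∫ ω, G (θ ω) (f ω) ∂μ := by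
  refine continuous_iff_seqContinuous.2 fun θ θ₀ h => ?_
  refine tendsto_of_subseq_tendsto fun ns hns => ?_
  obtain ⟨ms, -, hms⟩ := (tendstoInMeasure_of_tendsto_Lp (h.comp hns)).exists_seq_tendsto_ae
  refine ⟨ms, tendsto_integral_of_dominated_convergence (fun ω => ‖f ω‖)
    (fun n => aestronglyMeasurable_selection G (Lp.aestronglyMeasurable _)
      (Lp.aestronglyMeasurable f)) (L1.integrable_coeFn f).norm
    (fun n => ae_of_all _ fun ω => by
      simpa using (G _).le_of_opNorm_le (hG _) (f ω)) ?_⟩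
  filter_upwards [hms] with ω hω
  have h1 := ((continuous_of_discreteTopology (f := G)).tendsto _).comp hω
  exact ((ContinuousLinearMap.apply ℝ ℝ (f ω)).continuous.tendsto _).comp h1

/-- Weakly null sequences in `L¹(μ,X)` are eventually equi-integrable. -/
theorem equiIntegrable_of_weakly_null {μ : Measure Ω} [IsProbabilityMeasure μ] {h : ℕ → Lp X 1 μ}
    (hh : ∀ Φ : StrongDual ℝ (Lp X 1 μ), Tendsto (fun n => Φ (h n)) atTop (𝓝 0))
    {ε : ℝ} (hε : 0 < ε) :
    ∃ δ : ℝ, 0 < δ ∧ ∃ N, ∀ n ≥ N, ∀ A : Set Ω, MeasurableSet A → μ.real A < δ →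
      ∫ ω in A, ‖h n ω‖ ∂μ ≤ 5 * ε := by
  classical
  obtain ⟨φ, hφ1, hφ⟩ := exists_seq_norming (s := ⋃ n, range (h n : Ω → X))
    (TopologicalSpace.IsSeparable.iUnion fun n => (Lp.stronglyMeasurable (h n)).isSeparable_range)
  let G : DiscInt → StrongDual ℝ X := fun i => if i = 0 then 0 else φ (Int.natAbs i - 1)
  have hG : ∀ i, ‖G i‖ ≤ 1 := by
    intro i
    by_cases hi : i = 0
    · simp [G, hi]
    · simpa [G, hi] using hφ1 _
  let ι : ℕ → DiscInt := fun k => ((k + 1 : ℕ) : ℤ)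
  have hGι : ∀ k, G (ι k) = φ k := by
    intro k
    have : ι k ≠ 0 := fun h => by
      have : ((k + 1 : ℕ) : ℤ) = 0 := h
      omega
    simp only [G, if_neg this]
    congr 1
  have hG0 : G 0 = 0 := by simp [G]
  let Λ : Lp DiscInt 1 μ → Lp X 1 μ → ℝ := fun θ f => ∫ ω, G (θ ω) (f ω) ∂μ
  let F : ℕ → Set (Lp DiscInt 1 μ) := fun N => {θ | ∀ n ≥ N, |Λ θ (h n)| ≤ ε}
  have hF : ∀ N, IsClosed (F N) := by
    intro N
    have : F N = ⋂ n ≥ N, {θ | |Λ θ (h n)| ≤ ε} := by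
      ext θ
      simp [F]
    rw [this]
    exact isClosed_biInter fun n _ =>
      isClosed_le (continuous_selection hG (h n)).abs continuous_const
  have hU : ⋃ N, F N = univ := by
    refine eq_univ_of_forall fun θ => ?_
    obtain ⟨Φ, hΦ⟩ := exists_selection_functional hG (Lp.aestronglyMeasurable θ)
    have h1 := (hh Φ).abs
    simp only [hΦ, abs_zero] at h1
    obtain ⟨N, hN⟩ := eventually_atTop.1 (h1.eventually_lt_const hε)
    exact mem_iUnion.2 ⟨N, fun n hn => (hN n hn).le⟩
  obtain ⟨N, θ₀, hθ₀⟩ := nonempty_interior_of_iUnion_of_closed hF hU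
  obtain ⟨δ, hδ, hball⟩ := Metric.mem_nhds_iff.1 (mem_interior_iff_mem_nhds.1 hθ₀)
  refine ⟨δ, hδ, N, fun n hn A hA hμA => ?_⟩
  have hex : ∀ ω, ∃ i, ‖h n ω‖ - ε ≤ φ i (h n ω) := fun ω =>
    hφ _ (mem_iUnion.2 ⟨n, mem_range_self ω⟩) ε hε
  let θ : Ω → ℕ := fun ω => Nat.find (hex ω)
  have hθ : ∀ ω, ‖h n ω‖ - ε ≤ φ (θ ω) (h n ω) := fun ω => Nat.find_spec (hex ω)
  have hsm := Lp.stronglyMeasurable (h n)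
  have hθm : Measurable θ := by
    refine measurable_find hex fun k => ?_
    exact measurableSet_le (hsm.norm.measurable.sub_const ε)
      ((φ k).continuous.comp_stronglyMeasurable hsm).measurable
  have hιθ : StronglyMeasurable fun ω => ι (θ ω) :=
    (continuous_of_discreteTopology (f := ι)).comp_stronglyMeasurable hθm.stronglyMeasurable
  have key : ∀ σ : Ω → DiscInt, StronglyMeasurable σ →
      |∫ ω, G (A.piecewise σ θ₀ ω) (h n ω) ∂μ| ≤ ε := by
    intro σ hσ
    have hL : MemLp (A.piecewise σ θ₀) 1 μ :=
      MemLp.of_bound (hσ.piecewise hA (Lp.stronglyMeasurable θ₀)).aestronglyMeasurable 1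
        (ae_of_all _ fun ω => DiscInt.norm_le_one _)
    have hmem : hL.toLp _ ∈ Metric.ball θ₀ δ := by
      rw [Metric.mem_ball, L1.dist_eq_integral_dist]
      refine lt_of_le_of_lt ?_ hμA
      rw [← integral_indicator_one hA]
      refine integral_mono_of_nonneg (ae_of_all _ fun ω => dist_nonneg)
        ((integrable_const _).indicator hA) ?_
      filter_upwards [hL.coeFn_toLp] with ω hω
      rw [hω]
      by_cases hωA : ω ∈ A
      · rw [dist_eq_norm, indicator_of_mem hωA]
        exact DiscInt.norm_le_one _
      · simp [hωA]
    have h1 := hball hmem n hn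
    have h2 : Λ (hL.toLp _) (h n) = ∫ ω, G (A.piecewise σ θ₀ ω) (h n ω) ∂μ := by
      refine integral_congr_ae ?_
      filter_upwards [hL.coeFn_toLp] with ω hω
      rw [hω]
    rwa [h2] at h1
  have hint : ∀ σ : Ω → DiscInt, StronglyMeasurable σ →
      Integrable (fun ω => G (A.piecewise σ θ₀ ω) (h n ω)) μ := fun σ hσ =>
    (L1.integrable_coeFn (h n)).norm.mono' (aestronglyMeasurable_selection G
      (hσ.piecewise hA (Lp.stronglyMeasurable θ₀)).aestronglyMeasurable hsm.aestronglyMeasurable)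
      (ae_of_all _ fun ω => by simpa using (G _).le_of_opNorm_le (hG _) (h n ω))
  have k1 := abs_le.1 (key _ hιθ)
  have k2 := abs_le.1 (key _ (stronglyMeasurable_const (b := (0 : DiscInt))))
  have hint1 := hint _ hιθ
  have hint2 := hint _ (stronglyMeasurable_const (b := (0 : DiscInt)))
  have h3 : ∫ ω in A, ‖h n ω‖ ∂μ ≤ ∫ ω, (ε + (G (A.piecewise (fun ω => ι (θ ω)) θ₀ ω) (h n ω) -
      G (A.piecewise (fun _ => 0) θ₀ ω) (h n ω))) ∂μ := by
    rw [← integral_indicator hA]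
    refine integral_mono ((L1.integrable_coeFn (h n)).norm.indicator hA)
      ((integrable_const _).add (hint1.sub hint2)) fun ω => ?_
    by_cases hωA : ω ∈ A
    · simp only [indicator_of_mem hωA, piecewise_eq_of_mem _ _ _ hωA, hGι, hG0]
      have := hθ ω
      rw [_root_.zero_apply]
      linarith
    · simp only [indicator_of_notMem hωA, piecewise_eq_of_notMem _ _ _ hωA]
      linarith
  have h4 := integral_add (integrable_const ε) (hint1.sub hint2) (μ := μ)
  have h5 := integral_sub hint1 hint2
  have h6 : ∫ _, ε ∂μ = ε := by simp
  simp only [Pi.sub_apply] at h4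
  linarith [k1.1, k1.2, k2.1, k2.2]

/-- Relatively weakly compact subsets of `L¹(μ,X)` are uniformly integrable. -/
theorem IsRelWeaklyCompact.unifIntegrableSet {μ : Measure Ω} [IsProbabilityMeasure μ]
    {K : Set (Lp X 1 μ)} (hK : IsRelWeaklyCompact K) : UnifIntegrableSet μ K := by
  refine ⟨hK.exists_norm_le, ?_⟩
  by_contra! hcon
  obtain ⟨ε, hε, hcon⟩ := hcon
  choose f hf A hA hfA using fun n : ℕ =>
    hcon (1 / ((n : ℝ) + 1)) (by positivity)
  obtain ⟨ψ, hψ, f₀, hf₀⟩ := hK.exists_subseq hf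
  have hnull : ∀ Φ : StrongDual ℝ (Lp X 1 μ), Tendsto (fun n => Φ (f (ψ n) - f₀)) atTop (𝓝 0) := by
    intro Φ
    have := (hf₀ Φ).sub_const (Φ f₀)
    simpa using this
  obtain ⟨δ, hδ, N, hN⟩ := equiIntegrable_of_weakly_null hnull (show 0 < ε / 10 by positivity)
  have hi := L1.integrable_coeFn f₀
  let B : ℕ → Set Ω := fun n => toMeasurable μ (A (ψ n))
  have hB : ∀ n, μ.real (B n) ≤ 1 / ((ψ n : ℝ) + 1) := by
    intro n
    rw [measureReal_def, measure_toMeasurable]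
    exact ENNReal.toReal_le_of_le_ofReal (by positivity) (hA (ψ n))
  have hlim : Tendsto (fun n => μ.real (B n)) atTop (𝓝 0) :=
    squeeze_zero (fun n => measureReal_nonneg) hB
      (tendsto_one_div_add_atTop_nhds_zero_nat.comp hψ.tendsto_atTop)
  have hlim' : Tendsto (fun n => μ (B n)) atTop (𝓝 0) := by
    have := ENNReal.tendsto_ofReal hlim
    simpa using this
  have hlim2 : Tendsto (fun n => ∫ ω in B n, ‖f₀ ω‖ ∂μ) atTop (𝓝 0) :=
    hi.norm.tendsto_setIntegral_nhds_zero hlim'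
  obtain ⟨n, ⟨h1, h2⟩, h3⟩ := (((hlim.eventually_lt_const hδ).and
    (hlim2.eventually_lt_const (half_pos hε))).and (eventually_ge_atTop N)).exists
  have h4 := hN n h3 (B n) (measurableSet_toMeasurable _ _) h1
  have h5 := hfA (ψ n)
  rw [← Measure.restrict_toMeasurable (measure_ne_top μ _)] at h5
  have h6 : ∫ ω in B n, ‖f (ψ n) ω‖ ∂μ ≤
      ∫ ω in B n, (‖(f (ψ n) - f₀ : Lp X 1 μ) ω‖ + ‖f₀ ω‖) ∂μ := by
    refine integral_mono_ae (L1.integrable_coeFn _).norm.integrableOn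
      ((L1.integrable_coeFn _).norm.integrableOn.add hi.norm.integrableOn) ?_
    filter_upwards [ae_restrict_of_ae (Lp.coeFn_sub (f (ψ n)) f₀)] with ω hω
    simp only [hω, Pi.sub_apply]
    simpa using norm_add_le (f (ψ n) ω - f₀ ω) (f₀ ω)
  rw [integral_add (L1.integrable_coeFn _).norm.integrableOn hi.norm.integrableOn] at h6
  change ε < ∫ ω in B n, ‖f (ψ n) ω‖ ∂μ at h5
  linarith

/-- On bounded sets of functions, smallness in mean implies smallness in `L^p`. -/
theorem exists_integral_lt_norm_toLp_lt (μ : Measure Ω) [IsProbabilityMeasure μ] {p : ℝ≥0∞}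
    [hp : Fact (1 ≤ p)] (hp2 : p < ∞) (C : ℝ) {ε : ℝ} (hε : 0 < ε) :
    ∃ η : ℝ, 0 < η ∧ ∀ (f : Ω → X) (hf : MemLp f p μ), (∀ᵐ ω ∂μ, ‖f ω‖ ≤ C) →
      ∫ ω, ‖f ω‖ ∂μ < η → ‖hf.toLp f‖ < ε := by
  have hp0 : p ≠ 0 := (zero_lt_one.trans_le hp.out).ne'
  have hq : 1 ≤ p.toReal := by
    simpa using ENNReal.toReal_mono hp2.ne hp.out
  set q := p.toReal
  set D := max C 1
  have hD : 0 < D := lt_max_of_lt_right one_pos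
  have hDq : 0 < D ^ (q - 1) := Real.rpow_pos_of_pos hD _
  refine ⟨ε ^ q / D ^ (q - 1), by positivity, fun f hf hfC hfη => ?_⟩
  rw [lt_div_iff₀ hDq] at hfη
  rw [Lp.norm_toLp, hf.eLpNorm_eq_integral_rpow_norm hp0 hp2.ne,
    ENNReal.toReal_ofReal (by positivity)]
  have hfi : Integrable f μ := memLp_one_iff_integrable.1 (hf.mono_exponent hp.out)
  have h1 : ∫ ω, ‖f ω‖ ^ q ∂μ ≤ ∫ ω, ‖f ω‖ * D ^ (q - 1) ∂μ := by
    refine integral_mono_of_nonneg (ae_of_all _ fun ω => by positivity)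
      (hfi.norm.mul_const _) ?_
    filter_upwards [hfC] with ω hω
    rcases eq_or_ne ‖f ω‖ 0 with h0 | h0
    · simp [h0, Real.zero_rpow (by linarith : q ≠ 0)]
    · have : ‖f ω‖ ^ q = ‖f ω‖ * ‖f ω‖ ^ (q - 1) := by
        rw [Real.rpow_sub_one h0]
        field_simp
      rw [this]
      refine mul_le_mul_of_nonneg_left ?_ (norm_nonneg _)
      exact Real.rpow_le_rpow (norm_nonneg _) (hω.trans (le_max_left _ _)) (by linarith)
  rw [integral_mul_const] at h1
  calc (∫ ω, ‖f ω‖ ^ q ∂μ) ^ q⁻¹ < (ε ^ q) ^ q⁻¹ :=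
        Real.rpow_lt_rpow (by positivity) (h1.trans_lt hfη) (by positivity)
    _ = ε := Real.rpow_rpow_inv hε.le (by linarith)

theorem exists_toLp_mem_of_mem_convexHull {μ : Measure Ω} {p : ℝ≥0∞} [Fact (1 ≤ p)]
    {T : Set (Lp X p μ)} (hT : Convex ℝ T) {S : Set (Ω → X)}
    (hS : ∀ y ∈ S, ∃ hy : MemLp y p μ, hy.toLp y ∈ T) {y : Ω → X} (hy : y ∈ convexHull ℝ S) :
    ∃ hy : MemLp y p μ, hy.toLp y ∈ T := by
  have : Convex ℝ {y : Ω → X | ∃ hy : MemLp y p μ, hy.toLp y ∈ T} := by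
    rintro y ⟨hy, hyT⟩ z ⟨hz, hzT⟩ a b ha hb hab
    refine ⟨(hy.const_smul a).add (hz.const_smul b), ?_⟩
    rw [MemLp.toLp_add (hy.const_smul a) (hz.const_smul b), MemLp.toLp_const_smul a hy,
      MemLp.toLp_const_smul b hz]
    exact hT hyT hzT ha hb hab
  exact convexHull_min hS this hy

theorem add_mem_convexHull_of_sub {Z : Type*} [AddCommGroup Z] [Module ℝ Z] {w : ℕ → Z} {f t : Z}
    {s : Set ℕ} (ht : t ∈ convexHull ℝ ((fun k => w k - f) '' s)) :
    t + f ∈ convexHull ℝ (w '' s) := by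
  refine convexHull_min (t := (fun x => x + f) ⁻¹' convexHull ℝ (w '' s)) ?_
    ((convex_convexHull ℝ _).translate_preimage_left f) ht
  rintro _ ⟨k, hk, rfl⟩
  simpa using subset_convexHull ℝ _ (mem_image_of_mem w hk)

/-- A coordinatewise convergent sequence in a weakly compact subset of a separable subspace
converges weakly. -/
theorem exists_weakTendsto_of_norming {Z : Type*} [NormedAddCommGroup Z] [NormedSpace ℝ Z]
    (M : Submodule ℝ Z) {φ : ℕ → StrongDual ℝ Z}
    (hφ : ∀ x ∈ M, ∀ ε : ℝ, 0 < ε → ∃ i, ‖x‖ - ε ≤ φ i x) {W : Set Z} (hW : IsWeaklyCompact W)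
    (hWM : W ⊆ M) {u : ℕ → Z} (hu : ∀ n, u n ∈ W)
    (hlim : ∀ i, ∃ c, Tendsto (fun n => φ i (u n)) atTop (𝓝 c)) :
    ∃ x ∈ W, ∀ ψ : StrongDual ℝ Z, Tendsto (fun n => ψ (u n)) atTop (𝓝 (ψ x)) := by
  have hemb := isClosedEmbedding_norming M hφ hW (image_mono hWM)
  choose c hc using hlim
  let s : ℕ → toWeakSpace ℝ Z '' W := fun n => ⟨toWeakSpace ℝ Z (u n), u n, hu n, rfl⟩
  have h1 : Tendsto (fun n i => φ i ((toWeakSpace ℝ Z).symm (s n))) atTop (𝓝 c) := by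
    rw [tendsto_pi_nhds]
    intro i
    simpa [s] using hc i
  obtain ⟨x, hx⟩ := hemb.isClosed_range.mem_of_tendsto h1
    (Eventually.of_forall fun n => mem_range_self (s n))
  rw [← hx] at h1
  have h2 : Tendsto s atTop (𝓝 x) := hemb.isEmbedding.tendsto_nhds_iff.2 h1
  obtain ⟨_, w, hw, rfl⟩ := x
  exact ⟨w, hw, weakTendsto_iff.1 ((continuous_subtype_val.tendsto _).comp h2)⟩

/-- A sequence of functions valued in a fixed weakly compact set has, in `L^p`, a limit point of
convex combinations of its tails. -/
theorem exists_mem_closure_convexHull {μ : Measure Ω} [IsProbabilityMeasure μ] {p : ℝ≥0∞}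
    [hp : Fact (1 ≤ p)] (hp2 : p < ∞) [CompleteSpace X] {W : Set X} (hW : IsWeaklyCompact W)
    (h0 : (0 : X) ∈ W) {v : ℕ → Ω → X} (hv : ∀ n, StronglyMeasurable (v n))
    (hvW : ∀ n ω, v n ω ∈ W) (hL : ∀ n, MemLp (v n) p μ) :
    ∃ g : Lp X p μ, ∀ n, g ∈ closure (convexHull ℝ ((fun k => (hL k).toLp (v k)) '' Ici n)) := by
  classical
  let M := (Submodule.span ℝ (⋃ n, range (v n))).topologicalClosure
  have hM : TopologicalSpace.IsSeparable (M : Set X) := isSeparable_closure_span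
    (TopologicalSpace.IsSeparable.iUnion fun n => (hv n).isSeparable_range)
  have hMc : IsClosed (M : Set X) := Submodule.isClosed_topologicalClosure _
  have hvM : ∀ n ω, v n ω ∈ M := fun n ω => (Submodule.le_topologicalClosure _)
    (Submodule.subset_span (mem_iUnion.2 ⟨n, mem_range_self ω⟩))
  obtain ⟨φ, hφ1, hφ⟩ := exists_seq_norming hM
  let W1 := W ∩ M
  have hW1 : IsWeaklyCompact W1 := by
    have : toWeakSpace ℝ X '' W1 = toWeakSpace ℝ X '' W ∩ toWeakSpace ℝ X '' (M : Set X) :=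
      image_inter (toWeakSpace ℝ X).injective
    change IsCompact (toWeakSpace ℝ X '' W1)
    rw [this]
    exact IsCompact.inter_right hW (isClosed_image_toWeakSpace M.convex hMc)
  let V := closure (convexHull ℝ W1)
  have hV : IsWeaklyCompact V := hW1.closure_convexHull (hM.mono inter_subset_right)
  have hVc : Convex ℝ V := (convex_convexHull ℝ _).closure
  have hW1V : W1 ⊆ V := (subset_convexHull ℝ _).trans subset_closure
  have hVM : V ⊆ M := closure_minimal (convexHull_min inter_subset_right M.convex) hMc
  have h0V : (0 : X) ∈ V := hW1V ⟨h0, M.zero_mem⟩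
  have hvV : ∀ n ω, v n ω ∈ V := fun n ω => hW1V ⟨hvW n ω, hvM n ω⟩
  obtain ⟨C, hC⟩ := IsRelWeaklyCompact.exists_norm_le (K := V) (IsCompact.closure hV)
  have hC0 : 0 ≤ C := (norm_nonneg _).trans (hC _ h0V)
  -- the sequence of scalar functions `(ω, i) ↦ φ i (v n ω)`
  let ν : Measure ℕ := Measure.count.toFinite
  let T : (Ω → X) →ₗ[ℝ] (Ω × ℕ → ℝ) :=
    { toFun := fun y z => φ z.2 (y z.1)
      map_add' := fun y z => by ext; simp
      map_smul' := fun c y => by ext; simp }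
  have hTm : ∀ n, StronglyMeasurable (T (v n)) := by
    intro n
    refine Measurable.stronglyMeasurable (measurable_from_prod_countable_left fun i => ?_)
    exact ((φ i).continuous.comp_stronglyMeasurable (hv n)).measurable
  have hTb : ∀ n z, ‖T (v n) z‖ ≤ C := fun n z =>
    ((φ z.2).le_of_opNorm_le (hφ1 _) _).trans (by simpa using hC _ (hvV n z.1))
  have hTL : ∀ n, MemLp (T (v n)) 2 (μ.prod ν) := fun n =>
    MemLp.of_bound (hTm n).aestronglyMeasurable C (ae_of_all _ (hTb n))
  have hTn : ∀ n, ‖(hTL n).toLp (T (v n))‖ ≤ measureUnivNNReal (μ.prod ν) ^ (2⁻¹ : ℝ) * C := by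
    intro n
    have := Lp.norm_le_of_ae_bound (f := (hTL n).toLp (T (v n))) hC0 (by
      filter_upwards [(hTL n).coeFn_toLp] with z hz
      rw [hz]
      exact hTb n z)
    simpa using this
  obtain ⟨y, hl, hy, hyl⟩ := exists_convexHull_tendsto hTn
  have hg : ∀ k, ∃ g ∈ convexHull ℝ (v '' Ici k), y k =ᵐ[μ.prod ν] T g := by
    intro k
    obtain ⟨t, ht, hyt⟩ := convexHull_toLp_subset hTL (Ici k) (hy k)
    rw [show (fun n => T (v n)) '' Ici k = T '' (v '' Ici k) by rw [image_image],
      ← LinearMap.image_convexHull] at ht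
    obtain ⟨g, hg, rfl⟩ := ht
    exact ⟨g, hg, hyt⟩
  choose g hg hyg using hg
  have hgV : ∀ k ω, g k ω ∈ V := by
    intro k ω
    have : Convex ℝ {y : Ω → X | y ω ∈ V} := fun y hy z hz a b ha hb hab =>
      hVc hy hz ha hb hab
    exact convexHull_min (by rintro _ ⟨n, -, rfl⟩; exact hvV n ω) this (hg k)
  have hgm : ∀ k, StronglyMeasurable (g k) := by
    intro k
    have : Convex ℝ {y : Ω → X | StronglyMeasurable y} := fun y hy z hz a b _ _ _ =>
      (hy.const_smul a).add (hz.const_smul b)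
    exact convexHull_min (by rintro _ ⟨n, -, rfl⟩; exact hv n) this (hg k)
  obtain ⟨ms, hms, hlim⟩ := (tendstoInMeasure_of_tendsto_Lp hyl).exists_seq_tendsto_ae
  have hlim2 : ∀ᵐ ω ∂μ, ∀ i, ∃ c, Tendsto (fun k => φ i (g (ms k) ω)) atTop (𝓝 c) := by
    have h1 : ∀ᵐ z ∂μ.prod ν, ∃ c, Tendsto (fun k => φ z.2 (g (ms k) z.1)) atTop (𝓝 c) := by
      filter_upwards [hlim, ae_all_iff.2 hyg] with z hz hz2
      simp only [hz2] at hz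
      exact ⟨_, hz⟩
    filter_upwards [Measure.ae_ae_of_ae_prod h1] with ω hω
    rw [ae_toFinite, Measure.ae_count_iff] at hω
    exact hω
  obtain ⟨E, hEsub, hEm, hE0⟩ : ∃ E ⊆ {ω | ∀ i, ∃ c,
      Tendsto (fun k => φ i (g (ms k) ω)) atTop (𝓝 c)},
      MeasurableSet E ∧ ∀ᵐ ω ∂μ, ω ∈ E := by
    obtain ⟨E, hE, hEm, hEs⟩ := exists_measurable_superset_of_null hlim2
    exact ⟨Eᶜ, compl_subset_comm.1 hE, hEm.compl, compl_mem_ae_iff.2 hEs⟩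
  let g' : ℕ → Ω → X := fun k => E.indicator (g (ms k))
  have hg'm : ∀ k, StronglyMeasurable (g' k) := fun k => (hgm _).indicator hEm
  have hg'V : ∀ k ω, g' k ω ∈ V := by
    intro k ω
    by_cases h : ω ∈ E
    · simpa [g', h] using hgV _ ω
    · simpa [g', h] using h0V
  have hex : ∀ ω, ∃ x ∈ V, ∀ ψ : StrongDual ℝ X,
      Tendsto (fun k => ψ (g' k ω)) atTop (𝓝 (ψ x)) := by
    intro ω
    refine exists_weakTendsto_of_norming M hφ hV hVM (fun k => hg'V k ω) fun i => ?_
    by_cases h : ω ∈ E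
    · simpa [g', h] using hEsub h i
    · exact ⟨0, by simp [g', h]⟩
  choose f hfV hf using hex
  have hfm : StronglyMeasurable f := by
    refine stronglyMeasurable_of_closedBall hM (fun ω => hVM (hfV ω)) fun x hx r => ?_
    have : f ⁻¹' Metric.closedBall x r = ⋂ i, {ω | φ i (f ω) - φ i x ≤ r} := by
      ext ω
      simp only [mem_preimage, mem_closedBall_iff_norm, mem_iInter, mem_ofPred_eq]
      constructor
      · intro h i
        rw [← map_sub]
        exact (le_abs_self _).trans (((φ i).le_of_opNorm_le (hφ1 i) _).trans (by simpa using h))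
      · intro h
        refine le_of_forall_pos_le_add fun ε hε => ?_
        obtain ⟨i, hi⟩ := hφ _ (M.sub_mem (hVM (hfV ω)) hx) ε hε
        have := h i
        rw [map_sub] at hi
        linarith
    rw [this]
    refine MeasurableSet.iInter fun i => measurableSet_le (Measurable.sub_const ?_ _)
      measurable_const
    exact measurable_of_tendsto_metrizable
      (fun k => ((φ i).continuous.comp_stronglyMeasurable (hg'm k)).measurable)
      (tendsto_pi_nhds.2 fun ω => hf ω (φ i))
  have hfL : MemLp f p μ := MemLp.of_bound hfm.aestronglyMeasurable C
    (ae_of_all _ fun ω => hC _ (hfV ω))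
  refine ⟨hfL.toLp f, fun n => Metric.mem_closure_iff.2 fun ε hε => ?_⟩
  obtain ⟨η, hη, hηε⟩ := exists_integral_lt_norm_toLp_lt (X := X) μ hp2 (C + C) hε
  obtain ⟨t, ht, htη⟩ := exists_convexHull_integral_lt (μ := μ) (u := fun k => g' k - f)
    (fun k => (hg'm k).sub hfm) (C := C + C)
    (fun k ω => (norm_sub_le _ _).trans (add_le_add (hC _ (hg'V k ω)) (hC _ (hfV ω))))
    (ae_of_all _ fun ω ψ => by simpa using (hf ω ψ).sub_const (ψ (f ω))) n hη
  have htb : ∀ ω, ‖t ω‖ ≤ C + C := by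
    have : Convex ℝ {y : Ω → X | ∀ ω, y ω ∈ Metric.closedBall (0 : X) (C + C)} :=
      fun y hy z hz a b ha hb hab ω => convex_closedBall _ _ (hy ω) (hz ω) ha hb hab
    intro ω
    have h1 := convexHull_min (t := {y : Ω → X | ∀ ω, y ω ∈ Metric.closedBall (0 : X) (C + C)})
      (by
        rintro _ ⟨k, -, rfl⟩ ω
        rw [mem_closedBall_zero_iff]
        exact (norm_sub_le _ _).trans (add_le_add (hC _ (hg'V k ω)) (hC _ (hfV ω)))) this ht ω
    simpa using h1
  have htf : ∃ hy : MemLp (t + f) p μ, hy.toLp (t + f) ∈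
      convexHull ℝ ((fun k => (hL k).toLp (v k)) '' Ici n) := by
    refine exists_toLp_mem_of_mem_convexHull (convex_convexHull ℝ _) ?_
      (add_mem_convexHull_of_sub ht)
    rintro _ ⟨k, hk, rfl⟩
    obtain ⟨hy, hyT⟩ := exists_toLp_mem_of_mem_convexHull
      (T := convexHull ℝ ((fun k => (hL k).toLp (v k)) '' Ici n)) (convex_convexHull ℝ _) (by
        rintro _ ⟨j, hj, rfl⟩
        exact ⟨hL j, subset_convexHull ℝ _
          ⟨j, mem_Ici.2 ((mem_Ici.1 hk).trans ((hms.id_le k).trans hj)), rfl⟩⟩) (hg (ms k))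
    have h2 : g (ms k) =ᵐ[μ] g' k := by
      filter_upwards [hE0] with ω hω
      simp [g', hω]
    refine ⟨hy.ae_eq h2, ?_⟩
    rwa [← MemLp.toLp_congr hy (hy.ae_eq h2) h2]
  obtain ⟨hy, hyT⟩ := htf
  refine ⟨_, hyT, ?_⟩
  have htL : MemLp t p μ := by simpa using hy.sub hfL
  rw [dist_comm, dist_eq_norm]
  have h3 := hηε t htL (ae_of_all _ htb) htη
  rwa [MemLp.toLp_add htL hfL, add_sub_cancel_right]

theorem IsWeaklyCompact.isClosed {W : Set X} (hW : IsWeaklyCompact W) : IsClosed W := by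
  have h : IsClosed (toWeakSpace ℝ X '' W) := IsCompact.isClosed hW
  have := h.preimage (toWeakSpaceCLM ℝ X).continuous
  have h2 : (toWeakSpaceCLM ℝ X) ⁻¹' (toWeakSpace ℝ X '' W) = W :=
    preimage_image_eq W (toWeakSpace ℝ X).injective
  rwa [h2] at this

/-- A family of functions is weakly tight on `B` if, up to small subsets of `B`, its members take
values in a common weakly compact set. -/
def WeaklyTightOn {ι : Type*} (μ : Measure Ω) (B : Set Ω) (u : ι → Ω → X) : Prop :=
  ∀ δ : ℝ, 0 < δ → ∃ W : Set X, IsWeaklyCompact W ∧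
    ∀ i, μ (B \ u i ⁻¹' W) ≤ ENNReal.ofReal δ

namespace WeaklyTightOn

variable {ι : Type*} {μ : Measure Ω} {B B' : Set Ω} {u v : ι → Ω → X}

theorem congr (h : WeaklyTightOn μ B u) (huv : ∀ i, u i =ᵐ[μ] v i) : WeaklyTightOn μ B v := by
  intro δ hδ
  obtain ⟨W, hW, hWu⟩ := h δ hδ
  refine ⟨W, hW, fun i => (measure_mono_ae ?_).trans (hWu i)⟩
  filter_upwards [huv i] with ω hω h
  exact ⟨h.1, fun h2 => h.2 (by rw [mem_preimage, ← hω]; exact h2)⟩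

theorem comp {κ : Type*} (h : WeaklyTightOn μ B u) (ψ : κ → ι) :
    WeaklyTightOn μ B (fun k => u (ψ k)) := by
  intro δ hδ
  obtain ⟨W, hW, hWu⟩ := h δ hδ
  exact ⟨W, hW, fun i => hWu _⟩

theorem union (h : WeaklyTightOn μ B u) (h' : WeaklyTightOn μ B' u) :
    WeaklyTightOn μ (B ∪ B') u := by
  intro δ hδ
  obtain ⟨W, hW, hWu⟩ := h (δ / 2) (half_pos hδ)
  obtain ⟨W', hW', hWu'⟩ := h' (δ / 2) (half_pos hδ)
  refine ⟨W ∪ W', hW.union hW', fun i => ?_⟩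
  calc μ ((B ∪ B') \ u i ⁻¹' (W ∪ W')) ≤ μ ((B \ u i ⁻¹' W) ∪ (B' \ u i ⁻¹' W')) :=
        measure_mono (by
          rintro ω ⟨h1 | h1, h2⟩
          · exact Or.inl ⟨h1, fun h3 => h2 (Or.inl h3)⟩
          · exact Or.inr ⟨h1, fun h3 => h2 (Or.inr h3)⟩)
    _ ≤ ENNReal.ofReal (δ / 2) + ENNReal.ofReal (δ / 2) :=
        (measure_union_le _ _).trans (add_le_add (hWu i) (hWu' i))
    _ = ENNReal.ofReal δ := by
        rw [← ENNReal.ofReal_add (by positivity) (by positivity), add_halves]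

theorem add (h : WeaklyTightOn μ B u) (h' : WeaklyTightOn μ B v) :
    WeaklyTightOn μ B (fun i => u i + v i) := by
  intro δ hδ
  obtain ⟨W, hW, hWu⟩ := h (δ / 2) (half_pos hδ)
  obtain ⟨W', hW', hWu'⟩ := h' (δ / 2) (half_pos hδ)
  refine ⟨W + W', hW.add hW', fun i => ?_⟩
  calc μ (B \ (u i + v i) ⁻¹' (W + W')) ≤ μ ((B \ u i ⁻¹' W) ∪ (B \ v i ⁻¹' W')) :=
        measure_mono (by
          rintro ω ⟨h1, h2⟩
          by_cases h3 : u i ω ∈ W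
          · exact Or.inr ⟨h1, fun h4 => h2 (Set.add_mem_add h3 h4)⟩
          · exact Or.inl ⟨h1, h3⟩)
    _ ≤ ENNReal.ofReal (δ / 2) + ENNReal.ofReal (δ / 2) :=
        (measure_union_le _ _).trans (add_le_add (hWu i) (hWu' i))
    _ = ENNReal.ofReal δ := by
        rw [← ENNReal.ofReal_add (by positivity) (by positivity), add_halves]

theorem le_measure [IsProbabilityMeasure μ] {W : Set X} {f : Ω → X} {δ : ℝ}
    (h : μ (univ \ f ⁻¹' W) ≤ ENNReal.ofReal δ) : 1 - ENNReal.ofReal δ ≤ μ (f ⁻¹' W) := by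
  rw [tsub_le_iff_right, ← measure_univ (μ := μ), ← union_compl_self (f ⁻¹' W),
    compl_eq_univ_sdiff]
  exact (measure_union_le _ _).trans (add_le_add_right h _)

theorem measure_diff_le [IsProbabilityMeasure μ] {W : Set X} (hW : IsWeaklyCompact W) {f : Ω → X}
    (hf : AEStronglyMeasurable f μ) {δ : ℝ} (h : 1 - ENNReal.ofReal δ ≤ μ (f ⁻¹' W)) :
    μ (univ \ f ⁻¹' W) ≤ ENNReal.ofReal δ := by
  have hm : NullMeasurableSet (f ⁻¹' W) μ := by
    borelize X
    exact hf.aemeasurable.nullMeasurable hW.isClosed.measurableSet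
  rw [← compl_eq_univ_sdiff, prob_compl_eq_one_sub₀ hm]
  rw [tsub_le_iff_right] at h ⊢
  rwa [add_comm]

end WeaklyTightOn

/-- A bounded set of functions is relatively weakly compact in `L^p` if each of its sequences has
a weakly tight subsequence. -/
theorem isRelWeaklyCompact_of_weaklyTight_subseq {μ : Measure Ω} [IsProbabilityMeasure μ]
    {p : ℝ≥0∞} [hp : Fact (1 ≤ p)] (hp2 : p < ∞) [CompleteSpace X] {A : Set (Lp X p μ)} {C : ℝ}
    (hC : ∀ f ∈ A, ∀ᵐ ω ∂μ, ‖f ω‖ ≤ C)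
    (h : ∀ u : ℕ → Lp X p μ, (∀ n, u n ∈ A) → ∃ ψ : ℕ → ℕ, StrictMono ψ ∧
      WeaklyTightOn μ univ (fun n => (u (ψ n) : Ω → X))) :
    IsRelWeaklyCompact A := by
  classical
  have hC' : ∀ f ∈ A, ∀ᵐ ω ∂μ, ‖f ω‖ ≤ max C 0 := fun f hf =>
    (hC f hf).mono fun ω hω => hω.trans (le_max_left _ _)
  have hD0 : 0 ≤ max C 0 := le_max_right _ _
  generalize max C 0 = D at hC' hD0
  refine isRelWeaklyCompact_of_seq ?_ ?_
  · exact ⟨_, fun f hf => Lp.norm_le_of_ae_bound hD0 (hC' f hf)⟩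
  · intro u hu ε hε
    obtain ⟨ψ, hψ, ht⟩ := h u hu
    obtain ⟨η, hη, hηε⟩ := exists_integral_lt_norm_toLp_lt (X := X) μ hp2 D hε
    obtain ⟨W, hW, hWu⟩ := ht (η / (2 * (D + 1))) (by positivity)
    have hW' : IsWeaklyCompact (W ∪ {0}) := hW.union isCompact_singleton.isWeaklyCompact
    let S : ℕ → Set Ω := fun n => (u (ψ n) : Ω → X) ⁻¹' W
    have hS : ∀ n, MeasurableSet (S n) := by
      intro n
      borelize X
      exact (Lp.stronglyMeasurable (u (ψ n))).measurable hW.isClosed.measurableSet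
    let v : ℕ → Ω → X := fun n => (S n).indicator (u (ψ n))
    have hv : ∀ n, StronglyMeasurable (v n) := fun n =>
      (Lp.stronglyMeasurable _).indicator (hS n)
    have hvW : ∀ n ω, v n ω ∈ W ∪ {0} := by
      intro n ω
      by_cases hω : ω ∈ S n
      · exact Or.inl (by rw [show v n ω = u (ψ n) ω from indicator_of_mem hω _]; exact hω)
      · simp [v, hω]
    have hL : ∀ n, MemLp (v n) p μ := fun n => (Lp.memLp (u (ψ n))).indicator (hS n)
    refine ⟨ψ, hψ, fun n => (hL n).toLp (v n), fun n => ?_,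
      exists_mem_closure_convexHull hp2 hW' (Or.inr rfl) hv hvW hL⟩
    have hb : ∀ᵐ ω ∂μ, ‖(v n - (u (ψ n) : Ω → X)) ω‖ ≤ (S n)ᶜ.indicator (fun _ => D) ω := by
      filter_upwards [hC' _ (hu (ψ n))] with ω hω
      by_cases hωS : ω ∈ S n
      · simp [v, hωS]
      · simpa [v, hωS] using hω
    have h1 := hηε (v n - (u (ψ n) : Ω → X)) ((hL n).sub (Lp.memLp _)) (by
      filter_upwards [hb] with ω hω
      exact hω.trans (indicator_le_self' (fun _ _ => hD0) ω)) (by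
      have h2 : ∫ ω, ‖(v n - (u (ψ n) : Ω → X)) ω‖ ∂μ ≤
          ∫ ω, (S n)ᶜ.indicator (fun _ => D) ω ∂μ :=
        integral_mono_of_nonneg (ae_of_all _ fun ω => norm_nonneg _)
          ((integrable_const D).indicator (hS n).compl) hb
      refine h2.trans_lt ?_
      rw [integral_indicator_const D (hS n).compl, smul_eq_mul]
      have h3 : μ.real (S n)ᶜ ≤ η / (2 * (D + 1)) := by
        have := hWu n
        rw [← compl_eq_univ_sdiff] at this
        exact ENNReal.toReal_le_of_le_ofReal (by positivity) this
      calc μ.real (S n)ᶜ * D ≤ η / (2 * (D + 1)) * D := by gcongr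
        _ < η := by
          rw [div_mul_eq_mul_div, div_lt_iff₀ (by positivity)]
          nlinarith)
    rw [MemLp.toLp_sub (hL n) (Lp.memLp _), Lp.toLp_coeFn] at h1
    exact h1.le

open ProbabilityTheory unitInterval in
/-- The probability integral transform. -/
theorem exists_map_eq_volume_unitInterval (ν : Measure ℝ) [IsProbabilityMeasure ν]
    (hν : ∀ x, ν {x} = 0) : ∃ G : ℝ → I, Measurable G ∧ ν.map G = volume := by
  have hcont : Continuous (cdf ν) := by
    rw [continuous_iff_continuousAt]
    intro x
    rw [(monotone_cdf ν).continuousAt_iff_leftLim_eq_rightLim, StieltjesFunction.rightLim_eq]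
    have h := (cdf ν).measure_singleton x
    rw [measure_cdf, hν, eq_comm, ENNReal.ofReal_eq_zero] at h
    exact le_antisymm ((monotone_cdf ν).leftLim_le le_rfl) (by linarith)
  have hex : ∀ a : ℝ, 0 < a → a < 1 → ∃ x, cdf ν x = a := by
    intro a h0 h1
    obtain ⟨x, hx⟩ := ((tendsto_cdf_atBot ν).eventually_lt_const h0).exists
    obtain ⟨y, hy⟩ := ((tendsto_cdf_atTop ν).eventually_const_lt h1).exists
    exact mem_range_of_exists_le_of_exists_ge hcont ⟨x, hx.le⟩ ⟨y, hy.le⟩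
  let G : ℝ → I := fun x => ⟨cdf ν x, cdf_nonneg ν x, cdf_le_one ν x⟩
  have hG : Measurable G := (hcont.subtype_mk _).measurable
  have hlt : ∀ a : ℝ, 0 < a → a < 1 → ν {x | cdf ν x < a} ≤ ENNReal.ofReal a := by
    intro a h0 h1
    obtain ⟨x, hx⟩ := hex a h0 h1
    rw [← hx, ofReal_cdf]
    exact measure_mono fun y hy => le_of_lt ((monotone_cdf ν).reflect_lt hy)
  have := Measure.isProbabilityMeasure_map (μ := ν) hG.aemeasurable
  refine ⟨G, hG, Measure.ext_of_Iic _ _ fun a => ?_⟩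
  rw [Measure.map_apply hG measurableSet_Iic, unitInterval.volume_Iic]
  have hpre : G ⁻¹' Iic a = {x | cdf ν x ≤ a} := by
    ext x
    simp [G, ← Subtype.coe_le_coe]
  rw [hpre]
  rcases a.2.2.eq_or_lt with h1 | h1
  · rw [h1, show {x | cdf ν x ≤ 1} = univ from eq_univ_of_forall fun x => cdf_le_one ν x]
    simp
  · refine le_antisymm ?_ ?_
    · refine ge_of_tendsto (x := 𝓝[>] (a : ℝ))
        (ENNReal.continuous_ofReal.continuousAt.tendsto.mono_left nhdsWithin_le_nhds) ?_
      filter_upwards [Ioo_mem_nhdsGT h1] with b hb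
      exact (measure_mono fun x (hx : cdf ν x ≤ a) => hx.trans_lt hb.1).trans
        (hlt b (a.2.1.trans_lt hb.1) hb.2)
    · rcases a.2.1.eq_or_lt with h0 | h0
      · simp [← h0]
      · obtain ⟨x, hx⟩ := hex a h0 h1
        rw [← hx, ofReal_cdf]
        exact measure_mono fun y hy => monotone_cdf ν hy

/-- A random element with atomless law can be realized together with independent noise, as a
function of itself. -/
theorem exists_measurable_map_eq_prod {ρ : Measure Ω} [IsFiniteMeasure ρ] {Y Θ : Type*}
    [MeasurableSpace Y] [StandardBorelSpace Y] [MeasurableSpace Θ] [StandardBorelSpace Θ]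
    (κ : Measure Θ) [IsProbabilityMeasure κ] {F : Ω → Y} (hF : Measurable F)
    (hat : ∀ y, ρ.map F {y} = 0) :
    ∃ Ψ : Ω → Θ × Y, Measurable Ψ ∧ ρ.map Ψ = κ.prod (ρ.map F) := by
  obtain ⟨θ₀⟩ : Nonempty Θ := nonempty_of_isProbabilityMeasure κ
  rcases eq_or_ne ρ 0 with rfl | hρ
  · exact ⟨fun ω => (θ₀, F ω), by fun_prop, by simp⟩
  have hne : NeZero ρ := ⟨hρ⟩
  let c := (ρ univ)⁻¹
  have hc0 : ρ univ ≠ 0 := by simpa using hρ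
  have hct : ρ univ ≠ ∞ := measure_ne_top _ _
  let ρ' : Measure Ω := c • ρ
  have hρ' : IsProbabilityMeasure ρ' := ⟨by
    simp only [ρ', c, Measure.smul_apply, smul_eq_mul]
    exact ENNReal.inv_mul_cancel hc0 hct⟩
  have hρρ' : ρ = ρ univ • ρ' := by
    simp only [ρ', c, smul_smul, ENNReal.mul_inv_cancel hc0 hct, one_smul]
  have hlaw := Measure.isProbabilityMeasure_map (μ := ρ') hF.aemeasurable
  have hne : Nonempty (Θ × Y) := ⟨θ₀, (nonempty_of_isProbabilityMeasure (ρ'.map F)).some⟩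
  have he := measurableEmbedding_embeddingReal Y
  have hreal := Measure.isProbabilityMeasure_map (μ := ρ'.map F) he.measurable.aemeasurable
  obtain ⟨G, hG, hGv⟩ := exists_map_eq_volume_unitInterval ((ρ'.map F).map (embeddingReal Y)) (by
    intro x
    rw [Measure.map_apply he.measurable (measurableSet_singleton x)]
    have hs : (embeddingReal Y ⁻¹' {x}).Subsingleton :=
      subsingleton_singleton.preimage he.injective
    rcases hs.eq_empty_or_singleton with h | ⟨y, h⟩
    · simp [h]
    · rw [h, Measure.map_smul, Measure.smul_apply, hat, smul_zero])
  obtain ⟨f, hf, hfv⟩ := (κ.prod (ρ'.map F)).exists_measurable_map_eq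
  refine ⟨f ∘ G ∘ embeddingReal Y ∘ F, hf.comp (hG.comp (he.measurable.comp hF)), ?_⟩
  have h1 : ρ'.map (f ∘ G ∘ embeddingReal Y ∘ F) = κ.prod (ρ'.map F) := by
    rw [← hfv, ← hGv, Measure.map_map hG he.measurable,
      Measure.map_map (hG.comp he.measurable) hF,
      Measure.map_map hf ((hG.comp he.measurable).comp hF)]
    rfl
  have h2 : ρ.map F = ρ univ • ρ'.map F := by rw [← Measure.map_smul, ← hρρ']
  rw [h2, Measure.prod_smul_right, ← h1, ← Measure.map_smul, ← hρρ']

/-- Random signs whose joint law is invariant under sign changes. -/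
structure IsRandomSigns {Θ : Type*} [MeasurableSpace Θ] (κ : Measure Θ) (e : ℕ → Θ → ℝ) :
    Prop where
  measurable : ∀ n, Measurable (e n)
  eq_or : ∀ n θ, e n θ = 1 ∨ e n θ = -1
  exists_flip : ∀ s : ℕ → ℝ, (∀ n, s n = 1 ∨ s n = -1) → ∃ τ : Θ → Θ,
    MeasurePreserving τ κ κ ∧ ∀ n θ, e n (τ θ) = s n * e n θ

theorem IsRandomSigns.comp {Θ : Type*} [MeasurableSpace Θ] {κ : Measure Θ} {e : ℕ → Θ → ℝ}
    (he : IsRandomSigns κ e) {ψ : ℕ → ℕ} (hψ : StrictMono ψ) :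
    IsRandomSigns κ (fun n => e (ψ n)) where
  measurable n := he.measurable _
  eq_or n := he.eq_or _
  exists_flip s hs := by
    obtain ⟨τ, hτ, hτe⟩ := he.exists_flip (Function.extend ψ s 1) fun n => by
      by_cases h : ∃ k, ψ k = n
      · obtain ⟨k, rfl⟩ := h
        rw [hψ.injective.extend_apply]
        exact hs k
      · rw [Function.extend_apply' _ _ _ h]
        exact Or.inl rfl
    exact ⟨τ, hτ, fun n θ => by rw [hτe, hψ.injective.extend_apply]⟩

theorem exists_isRandomSigns : ∃ (κ : Measure (ℕ → ZMod 2)) (e : ℕ → (ℕ → ZMod 2) → ℝ),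
    IsProbabilityMeasure κ ∧ IsRandomSigns κ e := by
  classical
  refine ⟨Measure.addHaarMeasure ⊤, fun n θ => if θ n = 0 then 1 else -1, ⟨?_⟩, ?_, ?_, ?_⟩
  · exact Measure.addHaarMeasure_self
  · intro n
    exact (measurable_of_countable fun a : ZMod 2 => if a = 0 then (1 : ℝ) else -1).comp
      (measurable_pi_apply n)
  · intro n θ
    split_ifs <;> simp
  · intro s hs
    refine ⟨fun θ => θ + fun n => if s n = 1 then 0 else 1, measurePreserving_add_right _ _, ?_⟩
    intro n θ
    have h2 : ∀ a : ZMod 2, a = 0 ∨ a = 1 := by decide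
    rcases hs n with h | h <;> rcases h2 (θ n) with h' | h' <;>
      norm_num [h, h', show (1 : ZMod 2) + 1 = 0 from by decide]

theorem WeaklyTightOn.iUnion {ι : Type*} {μ : Measure Ω} [IsFiniteMeasure μ] {A : ℕ → Set Ω}
    (hA : ∀ i, MeasurableSet (A i)) {u : ι → Ω → X} (h : ∀ i, WeaklyTightOn μ (A i) u) :
    WeaklyTightOn μ (⋃ i, A i) u := by
  have hacc : ∀ k, WeaklyTightOn μ (accumulate A k) u := by
    intro k
    induction k with
    | zero => simpa using h 0
    | succ k ih => rw [accumulate_succ]; exact ih.union (h _)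
  have hm : ∀ k, MeasurableSet (accumulate A k) := fun k => by
    rw [accumulate_def]
    exact MeasurableSet.biUnion (to_countable _) fun i _ => hA i
  intro δ hδ
  have hlim : Tendsto (fun k => μ ((⋃ i, A i) \ accumulate A k)) atTop (𝓝 0) := by
    have h1 := ENNReal.Tendsto.sub (tendsto_const_nhds (x := μ (⋃ i, A i)))
      (tendsto_measure_iUnion_accumulate (μ := μ) (f := A)) (Or.inl (measure_ne_top _ _))
    rw [tsub_self] at h1
    refine h1.congr fun k => ?_
    rw [measure_sdiff (accumulate_subset_iUnion k) (hm k).nullMeasurableSet (measure_ne_top _ _)]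
  obtain ⟨k, hk⟩ := (hlim.eventually_lt_const
    (show (0 : ℝ≥0∞) < ENNReal.ofReal (δ / 2) by simpa using hδ)).exists
  obtain ⟨W, hW, hWu⟩ := hacc k (δ / 2) (half_pos hδ)
  refine ⟨W, hW, fun i => ?_⟩
  calc μ ((⋃ i, A i) \ u i ⁻¹' W)
      ≤ μ (((⋃ i, A i) \ accumulate A k) ∪ (accumulate A k \ u i ⁻¹' W)) :=
        measure_mono fun ω hω => by
          by_cases h1 : ω ∈ accumulate A k
          · exact Or.inr ⟨h1, hω.2⟩
          · exact Or.inl ⟨hω.1, h1⟩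
    _ ≤ ENNReal.ofReal (δ / 2) + ENNReal.ofReal (δ / 2) :=
        (measure_union_le _ _).trans (add_le_add hk.le (hWu i))
    _ = ENNReal.ofReal δ := by
        rw [← ENNReal.ofReal_add (by positivity) (by positivity), add_halves]

theorem IsWeaklyCompact.insert_range {u : ℕ → X} {x : X}
    (h : ∀ φ : StrongDual ℝ X, Tendsto (fun n => φ (u n)) atTop (𝓝 (φ x))) :
    IsWeaklyCompact (insert x (range u)) := by
  have h1 := (weakTendsto_iff.2 h).isCompact_insert_range
  unfold IsWeaklyCompact
  rwa [image_insert_eq, ← range_comp]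

/-- A weakly null sequence in `L¹` is weakly tight on any set on which all its members are
constant. -/
theorem weaklyTightOn_of_const [CompleteSpace X] {μ : Measure Ω} [IsProbabilityMeasure μ]
    {f : ℕ → Lp X 1 μ} (hf : ∀ φ : StrongDual ℝ (Lp X 1 μ), Tendsto (fun n => φ (f n)) atTop (𝓝 0))
    {A : Set Ω} (hA : MeasurableSet A) {y : ℕ → X} (hy : ∀ n, ∀ ω ∈ A, f n ω = y n) :
    WeaklyTightOn μ A (fun n => (f n : Ω → X)) := by
  rcases eq_or_ne (μ A) 0 with h0 | h0
  · exact fun δ hδ => ⟨{0}, isCompact_singleton.isWeaklyCompact, fun i =>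
      (measure_mono_null sdiff_subset h0).trans_le bot_le⟩
  have hr : μ.real A ≠ 0 := by simpa [measureReal_def, ENNReal.toReal_eq_zero_iff] using h0
  let T : Lp X 1 μ →L[ℝ] X := (L1.integralCLM' ℝ (E := X)).comp (LpToLpRestrictCLM Ω X ℝ μ 1 A)
  have hT : ∀ n, T (f n) = μ.real A • y n := by
    intro n
    change L1.integralCLM (LpToLpRestrictCLM Ω X ℝ μ 1 A (f n)) = _
    rw [← L1.integral_eq, L1.integral_eq_integral, integral_congr_ae
      (LpToLpRestrictCLM_coeFn ℝ A (f n)), setIntegral_congr_fun hA (hy n), setIntegral_const]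
  have hlim : ∀ φ : StrongDual ℝ X, Tendsto (fun n => φ (y n)) atTop (𝓝 (φ 0)) := by
    intro φ
    have := (hf (φ.comp T)).const_mul (μ.real A)⁻¹
    simp only [ContinuousLinearMap.comp_apply, hT, map_smul, smul_eq_mul, mul_zero] at this
    rw [map_zero]
    refine this.congr fun n => ?_
    rw [inv_mul_cancel_left₀ hr]
  refine fun δ hδ => ⟨_, IsWeaklyCompact.insert_range hlim, fun n => ?_⟩
  rw [show A \ (f n : Ω → X) ⁻¹' insert 0 (range y) = ∅ from
    sdiff_eq_empty.2 fun ω hω => Or.inr ⟨n, (hy n ω hω).symm⟩]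
  simp

/-- If `f` is weakly null, then some convex combination of the randomly signed `f n` is small
in mean. -/
theorem exists_signed_combination_lt {Θ : Type*} [MeasurableSpace Θ] {κ : Measure Θ}
    [IsProbabilityMeasure κ] {e : ℕ → Θ → ℝ} (he : IsRandomSigns κ e) {Z : Type*}
    [NormedAddCommGroup Z] [NormedSpace ℝ Z] {f : ℕ → Z}
    (hf : ∀ φ : StrongDual ℝ Z, Tendsto (fun n => φ (f n)) atTop (𝓝 0)) {ε : ℝ} (hε : 0 < ε) :
    ∃ a ∈ convexHull ℝ (range fun k => Finsupp.single k (1 : ℝ)),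
      ∫⁻ θ, ‖∑ k ∈ a.support, (a k * e k θ) • f k‖ₑ ∂κ < ENNReal.ofReal ε := by
  have habs : ∀ n θ, |e n θ| = 1 := fun n θ => by rcases he.eq_or n θ with h | h <;> simp [h]
  obtain ⟨C, hC⟩ := (isRelWeaklyCompact_range (z := (0 : Z))
    (fun φ => by simpa using hf φ)).exists_norm_le
  have hsm : ∀ n, StronglyMeasurable fun θ => e n θ • f n := fun n =>
    (he.measurable n).stronglyMeasurable.smul_const _
  obtain ⟨v, hv, hvε⟩ := exists_convexHull_integral_lt (μ := κ) (u := fun n θ => e n θ • f n)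
    hsm (C := C) (fun n θ => by
      rw [norm_smul, Real.norm_eq_abs, habs, one_mul]
      exact hC _ ⟨n, rfl⟩)
    (ae_of_all _ fun θ φ => by
      refine squeeze_zero_norm (fun n => ?_) (by simpa using (hf φ).norm)
      rw [map_smul, norm_smul, Real.norm_eq_abs (e n θ), habs, one_mul]
      rfl) 0 hε
  let T := Finsupp.linearCombination ℝ fun n θ => e n θ • f n
  have hv' : v ∈ T '' convexHull ℝ (range fun k => Finsupp.single k (1 : ℝ)) := by
    rw [LinearMap.image_convexHull, ← range_comp]
    refine convexHull_mono ?_ hv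
    rintro _ ⟨k, -, rfl⟩
    exact ⟨k, by simp [T]⟩
  obtain ⟨a, ha, rfl⟩ := hv'
  have hTa : T a = fun θ => ∑ k ∈ a.support, (a k * e k θ) • f k := by
    ext θ
    simp [T, Finsupp.linearCombination_apply, Finsupp.sum, Finset.sum_apply, mul_smul]
  rw [hTa] at hvε
  refine ⟨a, ha, ?_⟩
  have hm : StronglyMeasurable fun θ => ∑ k ∈ a.support, (a k * e k θ) • f k :=
    Finset.stronglyMeasurable_fun_sum _ fun k _ =>
      ((he.measurable k).const_mul _).stronglyMeasurable.smul_const _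
  have hint : Integrable (fun θ => ∑ k ∈ a.support, (a k * e k θ) • f k) κ := by
    refine integrable_finsetSum _ fun k _ => ?_
    refine Integrable.smul_const (Integrable.const_mul ?_ _) _
    exact Integrable.of_bound (he.measurable k).aestronglyMeasurable 1
      (ae_of_all _ fun θ => (habs k θ).le)
  rw [← ofReal_integral_norm_eq_lintegral_enorm hint]
  exact (ENNReal.ofReal_lt_ofReal_iff hε).2 hvε

/-- Contraction principle: dropping terms from a randomly signed sum decreases its mean norm. -/
theorem IsRandomSigns.lintegral_sum_le {Θ : Type*} [MeasurableSpace Θ] {κ : Measure Θ}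
    {e : ℕ → Θ → ℝ} (he : IsRandomSigns κ e) (t : Finset ℕ) (z z' : ℕ → X)
    (h : ∀ k, z' k = z k ∨ z' k = 0) :
    ∫⁻ θ, ‖∑ k ∈ t, e k θ • z' k‖ₑ ∂κ ≤ ∫⁻ θ, ‖∑ k ∈ t, e k θ • z k‖ₑ ∂κ := by
  classical
  obtain ⟨τ, hτ, hτe⟩ := he.exists_flip (fun k => if z' k = z k then 1 else -1) fun k => by
    split_ifs <;> simp
  have hm : Measurable fun θ => ‖∑ k ∈ t, e k θ • z k‖ₑ :=
    (Finset.stronglyMeasurable_fun_sum _ fun k _ =>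
      (he.measurable k).stronglyMeasurable.smul_const _).enorm
  have hsum : ∀ θ, ∑ k ∈ t, e k θ • z' k =
      (2⁻¹ : ℝ) • (∑ k ∈ t, e k θ • z k + ∑ k ∈ t, e k (τ θ) • z k) := by
    intro θ
    rw [← Finset.sum_add_distrib, Finset.smul_sum]
    refine Finset.sum_congr rfl fun k _ => ?_
    rw [hτe, ← add_smul, smul_smul]
    by_cases h1 : z' k = z k
    · rw [if_pos h1, h1]
      congr 1
      ring
    · rw [if_neg h1, (h k).resolve_left h1, smul_zero]
      rw [show 2⁻¹ * (e k θ + -1 * e k θ) = 0 by ring, zero_smul]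
  have h2 : ‖(2⁻¹ : ℝ)‖ₑ = 2⁻¹ := by
    rw [Real.enorm_of_nonneg (by norm_num), ENNReal.ofReal_inv_of_pos (by norm_num)]
    simp
  calc ∫⁻ θ, ‖∑ k ∈ t, e k θ • z' k‖ₑ ∂κ
      ≤ ∫⁻ θ, 2⁻¹ * (‖∑ k ∈ t, e k θ • z k‖ₑ + ‖∑ k ∈ t, e k (τ θ) • z k‖ₑ) ∂κ := by
        refine lintegral_mono fun θ => ?_
        dsimp only
        rw [hsum, enorm_smul, h2]
        gcongr
        exact enorm_add_le _ _
    _ = 2⁻¹ * (∫⁻ θ, ‖∑ k ∈ t, e k θ • z k‖ₑ ∂κ + ∫⁻ θ, ‖∑ k ∈ t, e k θ • z k‖ₑ ∂κ) := by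
        rw [lintegral_const_mul' _ _ (by simp), lintegral_add_left hm,
          hτ.lintegral_comp hm]
    _ = ∫⁻ θ, ‖∑ k ∈ t, e k θ • z k‖ₑ ∂κ := by
        rw [← two_mul, ← mul_assoc, ENNReal.inv_mul_cancel (by simp) (by simp), one_mul]

/-- Markov's inequality, uniformly on bounded subsets of `L¹`. -/
theorem exists_measure_le_norm_le (μ : Measure Ω) [IsProbabilityMeasure μ] (C : ℝ) {δ : ℝ}
    (hδ : 0 < δ) : ∃ R : ℝ, 0 < R ∧ ∀ f : Lp X 1 μ, ‖f‖ ≤ C →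
      μ {ω | R ≤ ‖f ω‖} ≤ ENNReal.ofReal δ := by
  refine ⟨(|C| + 1) / δ, by positivity, fun f hf => ?_⟩
  have h1 := mul_meas_ge_le_integral_of_nonneg (ae_of_all μ fun ω => norm_nonneg (f ω))
    (L1.integrable_coeFn f).norm ((|C| + 1) / δ)
  rw [← L1.norm_eq_integral_norm, div_mul_eq_mul_div, div_le_iff₀ hδ] at h1
  rw [← ofReal_measureReal]
  refine ENNReal.ofReal_le_ofReal ?_
  have h2 : |C| + 1 > 0 := by positivity
  refine le_of_mul_le_mul_left ?_ h2
  nlinarith [le_abs_self C]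

/-- The mean norm of randomly signed combinations of truncations of `f n ω`, computed with an
independent copy of `f`. -/
theorem lintegral_truncated_le {Θ : Type*} [MeasurableSpace Θ] {κ : Measure Θ}
    [IsProbabilityMeasure κ] {e : ℕ → Θ → ℝ} (he : IsRandomSigns κ e) {μ : Measure Ω}
    [IsProbabilityMeasure μ] (f : ℕ → Lp X 1 μ) (B : Set Ω) (R : ℝ) (a : ℕ →₀ ℝ) :
    ∫⁻ ω in B, ∫⁻ θ, ‖∑ k ∈ a.support,
        (a k * e k θ) • (Metric.closedBall (0 : X) R).indicator id (f k ω)‖ₑ ∂κ ∂μ ≤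
      ∫⁻ θ, ‖∑ k ∈ a.support, (a k * e k θ) • f k‖ₑ ∂κ := by
  have hsm : StronglyMeasurable fun z : Ω × Θ => ∑ k ∈ a.support, (a k * e k z.2) • f k z.1 :=
    Finset.stronglyMeasurable_fun_sum _ fun k _ => StronglyMeasurable.smul
      (((he.measurable k).const_mul _).comp measurable_snd).stronglyMeasurable
      ((Lp.stronglyMeasurable (f k)).comp_measurable measurable_fst)
  calc _ ≤ ∫⁻ ω in B, ∫⁻ θ, ‖∑ k ∈ a.support, (a k * e k θ) • f k ω‖ₑ ∂κ ∂μ := by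
        refine lintegral_mono fun ω => ?_
        have h1 := he.lintegral_sum_le a.support (fun k => a k • f k ω)
          (fun k => a k • (Metric.closedBall (0 : X) R).indicator id (f k ω)) fun k => by
            by_cases h : f k ω ∈ Metric.closedBall (0 : X) R
            · left; rw [indicator_of_mem h, id]
            · right; rw [indicator_of_notMem h, smul_zero]
        simpa only [smul_smul, mul_comm (e _ _)] using h1
    _ ≤ ∫⁻ ω, ∫⁻ θ, ‖∑ k ∈ a.support, (a k * e k θ) • f k ω‖ₑ ∂κ ∂μ := setLIntegral_le_lintegral _ _
    _ = ∫⁻ θ, ∫⁻ ω, ‖∑ k ∈ a.support, (a k * e k θ) • f k ω‖ₑ ∂μ ∂κ :=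
        lintegral_lintegral_swap hsm.enorm.aemeasurable
    _ = _ := by
        refine lintegral_congr fun θ => ?_
        rw [Lp.enorm_def, eLpNorm_one_eq_lintegral_enorm]
        refine lintegral_congr_ae ?_
        filter_upwards [Lp.coeFn_finsetSum a.support fun k => (a k * e k θ) • f k,
          ae_all_iff.2 fun k => Lp.coeFn_smul (a k * e k θ) (f k)] with ω h1 h2
        rw [h1]
        simp [h2]

/-- A weakly null sequence in `L¹` whose law on `B` is atomless is weakly tight on `B`, provided
bounded weakly null sequences in `L^p` are weakly tight. -/
theorem weaklyTightOn_of_atomless [CompleteSpace X] {μ : Measure Ω} [IsProbabilityMeasure μ]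
    {p : ℝ≥0∞} [hp : Fact (1 ≤ p)] (hp2 : p < ∞)
    (H : ∀ h : ℕ → Lp X p μ, (∀ φ : StrongDual ℝ (Lp X p μ),
      Tendsto (fun n => φ (h n)) atTop (𝓝 0)) → WeaklyTightOn μ univ fun n => (h n : Ω → X))
    {f : ℕ → Lp X 1 μ} (hf : ∀ φ : StrongDual ℝ (Lp X 1 μ), Tendsto (fun n => φ (f n)) atTop (𝓝 0))
    {M : Submodule ℝ X} [MeasurableSpace M] [BorelSpace M] [SecondCountableTopology M]
    (hM : IsClosed (M : Set X))
    {F : Ω → ℕ → M} (hF : Measurable F) (hFf : ∀ n ω, (F ω n : X) = f n ω) {B : Set Ω}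
    (hB : MeasurableSet B) (hat : ∀ y, (μ.restrict B).map F {y} = 0) :
    WeaklyTightOn μ B fun n => (f n : Ω → X) := by
  have hMc : CompleteSpace M := hM.completeSpace_coe
  obtain ⟨κ, e, hκ, he⟩ := exists_isRandomSigns
  obtain ⟨Ψ, hΨ, hΨmap⟩ := exists_measurable_map_eq_prod κ hF hat
  intro δ hδ
  obtain ⟨C, hC⟩ := (isRelWeaklyCompact_range (z := (0 : Lp X 1 μ))
    (fun φ => by simpa using hf φ)).exists_norm_le
  obtain ⟨R, hR0, hR⟩ := exists_measure_le_norm_le (X := X) μ C (half_pos hδ)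
  let tr : X → X := (Metric.closedBall (0 : X) R).indicator id
  have htr : ∀ x, ‖tr x‖ ≤ R := by
    intro x
    by_cases h : x ∈ Metric.closedBall (0 : X) R
    · simp only [tr]
      rw [indicator_of_mem h]
      exact mem_closedBall_zero_iff.1 h
    · simpa [tr, h] using hR0.le
  let Hx : ℕ → (ℕ → ZMod 2) × (ℕ → M) → X := fun n z => e n z.1 • tr (z.2 n)
  have htrm : ∀ n, StronglyMeasurable fun y : ℕ → M => tr (y n) := by
    intro n
    have h1 : StronglyMeasurable fun x : M => tr x := by
      have h2 : (fun x : M => tr x) =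
          ((↑) ⁻¹' Metric.closedBall (0 : X) R).indicator ((↑) : M → X) := by
        ext x
        by_cases h : (x : X) ∈ Metric.closedBall (0 : X) R
        · simp only [tr]; rw [indicator_of_mem h, indicator_of_mem (by exact h), id]
        · simp only [tr]; rw [indicator_of_notMem h, indicator_of_notMem (by exact h)]
      rw [h2]
      exact continuous_subtype_val.stronglyMeasurable.indicator
        (Metric.isClosed_closedBall.preimage continuous_subtype_val).measurableSet
    exact h1.comp_measurable (measurable_pi_apply n)
  have hHm : ∀ n, StronglyMeasurable (Hx n) := fun n =>
    ((he.measurable n).comp measurable_fst).stronglyMeasurable.smul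
      ((htrm n).comp_measurable measurable_snd)
  have hHb : ∀ n z, ‖Hx n z‖ ≤ R := by
    intro n z
    have : |e n z.1| = 1 := by rcases he.eq_or n z.1 with h | h <;> simp [h]
    simp only [Hx]
    rw [norm_smul, Real.norm_eq_abs, this, one_mul]
    exact htr _
  let h : ℕ → Ω → X := fun n => B.indicator fun ω => Hx n (Ψ ω)
  have hhm : ∀ n, StronglyMeasurable (h n) := fun n => ((hHm n).comp_measurable hΨ).indicator hB
  have hhb : ∀ n ω, ‖h n ω‖ ≤ R := by
    intro n ω
    by_cases hω : ω ∈ B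
    · simpa [h, hω] using hHb n (Ψ ω)
    · simpa [h, hω] using hR0.le
  have hL : ∀ n, MemLp (h n) p μ := fun n =>
    MemLp.of_bound (hhm n).aestronglyMeasurable R (ae_of_all _ (hhb n))
  have hnull : ∀ φ : StrongDual ℝ (Lp X p μ),
      Tendsto (fun n => φ ((hL n).toLp (h n))) atTop (𝓝 0) := by
    refine weakTendsto_zero_of_convexHull fun ψ hψ ε hε => ?_
    obtain ⟨η, hη, hηε⟩ := exists_integral_lt_norm_toLp_lt (X := X) μ hp2 R hε
    obtain ⟨a, ha, haη⟩ := exists_signed_combination_lt (he.comp hψ) (f := fun n => f (ψ n))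
      (fun φ => (hf φ).comp hψ.tendsto_atTop) hη
    let y : Ω → X := Finsupp.linearCombination ℝ (fun n => h (ψ n)) a
    have hy : y ∈ convexHull ℝ (range fun n => h (ψ n)) := by
      have : y ∈ Finsupp.linearCombination ℝ (fun n => h (ψ n)) ''
        convexHull ℝ (range fun k => Finsupp.single k (1 : ℝ)) := ⟨a, ha, rfl⟩
      rw [LinearMap.image_convexHull, ← range_comp] at this
      simpa [Function.comp_def] using this
    obtain ⟨hyL, hyT⟩ := exists_toLp_mem_of_mem_convexHull
      (T := convexHull ℝ (range ((fun n => (hL n).toLp (h n)) ∘ ψ))) (convex_convexHull ℝ _) (by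
        rintro _ ⟨n, rfl⟩
        exact ⟨hL _, subset_convexHull ℝ _ ⟨n, rfl⟩⟩) hy
    have hyb : ∀ ω, ‖y ω‖ ≤ R := by
      intro ω
      have : Convex ℝ {y : Ω → X | ∀ ω, y ω ∈ Metric.closedBall (0 : X) R} :=
        fun y hy z hz a b ha hb hab ω => convex_closedBall _ _ (hy ω) (hz ω) ha hb hab
      have h1 := convexHull_min (t := {y : Ω → X | ∀ ω, y ω ∈ Metric.closedBall (0 : X) R})
        (by
          rintro _ ⟨k, rfl⟩ ω
          rw [mem_closedBall_zero_iff]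
          exact hhb _ ω) this hy ω
      simpa using h1
    let G : (ℕ → ZMod 2) × (ℕ → M) → X := fun z => ∑ k ∈ a.support, a k • Hx (ψ k) z
    have hG : StronglyMeasurable G :=
      Finset.stronglyMeasurable_fun_sum _ fun k _ => (hHm _).const_smul _
    have hyG : y = B.indicator fun ω => G (Ψ ω) := by
      ext ω
      simp only [y, Finsupp.linearCombination_apply, Finsupp.sum, Finset.sum_apply, Pi.smul_apply]
      by_cases hω : ω ∈ B
      · simp [h, hω, G]
      · simp [h, hω]
    have hyint : ∫⁻ ω, ‖y ω‖ₑ ∂μ < ENNReal.ofReal η := by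
      refine lt_of_le_of_lt ?_ haη
      refine le_trans (le_of_eq ?_) (lintegral_truncated_le (he.comp hψ) (fun n => f (ψ n)) B R a)
      simp only [hyG, enorm_indicator_eq_indicator_enorm]
      rw [lintegral_indicator hB, ← lintegral_map (f := fun z => ‖G z‖ₑ) hG.enorm hΨ, hΨmap,
        lintegral_prod_symm' _ hG.enorm, lintegral_map hG.enorm.lintegral_prod_left' hF]
      simp only [G, Hx, smul_smul, hFf, tr]
    refine ⟨_, hyT, hηε y hyL (ae_of_all _ hyb) ?_⟩
    rw [integral_norm_eq_lintegral_enorm hyL.1]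
    exact ENNReal.toReal_lt_of_lt_ofReal hyint
  obtain ⟨W, hW, hWh⟩ := H _ hnull (δ / 2) (half_pos hδ)
  let N : X →L[ℝ] X := -ContinuousLinearMap.id ℝ X
  refine ⟨W ∪ N '' W, hW.union (hW.image N), fun n => ?_⟩
  set W' := W ∪ N '' W
  have hW' : IsClosed W' := (hW.union (hW.image N)).isClosed
  let D : Set (ℕ → M) := {y | tr (y n) ∉ W'}
  have hD : MeasurableSet D := by
    borelize X
    exact (htrm n).measurable hW'.isOpen_compl.measurableSet
  have hmarkov : μ {ω | R ≤ ‖f n ω‖} ≤ ENNReal.ofReal (δ / 2) := hR _ (hC _ ⟨n, rfl⟩)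
  have htransport : μ (F ⁻¹' D ∩ B) ≤ ENNReal.ofReal (δ / 2) := by
    refine le_trans ?_ (hWh n)
    rw [← Measure.restrict_apply (hF hD), ← Measure.map_apply hF hD,
      ← one_mul (Measure.map F _ D), ← measure_univ (μ := κ), ← Measure.prod_prod, ← hΨmap,
      Measure.map_apply hΨ (MeasurableSet.univ.prod hD),
      Measure.restrict_apply (hΨ (MeasurableSet.univ.prod hD))]
    refine measure_mono_ae ?_
    filter_upwards [(hL n).coeFn_toLp] with ω hω hωD
    refine ⟨trivial, fun hωW => ?_⟩
    have hωD1 : tr ((Ψ ω).2 n) ∉ W' := hωD.1.2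
    rw [mem_preimage, hω, show h n ω = Hx n (Ψ ω) from indicator_of_mem hωD.2 _] at hωW
    rcases he.eq_or n (Ψ ω).1 with h1 | h1
    · exact hωD1 (Or.inl (by simpa [Hx, h1] using hωW))
    · exact hωD1 (Or.inr ⟨_, hωW, by simp [N, Hx, h1]⟩)
  calc μ (B \ (f n : Ω → X) ⁻¹' W') ≤ μ ({ω | R ≤ ‖f n ω‖} ∪ (F ⁻¹' D ∩ B)) := by
        refine measure_mono fun ω hω => ?_
        by_cases h1 : R ≤ ‖f n ω‖
        · exact Or.inl h1
        · refine Or.inr ⟨?_, hω.1⟩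
          change tr (F ω n) ∉ W'
          rw [hFf, show tr (f n ω) = f n ω from
            indicator_of_mem (mem_closedBall_zero_iff.2 (not_le.1 h1).le) _]
          exact hω.2
    _ ≤ ENNReal.ofReal (δ / 2) + ENNReal.ofReal (δ / 2) :=
        (measure_union_le _ _).trans (add_le_add hmarkov htransport)
    _ = ENNReal.ofReal δ := by
        rw [← ENNReal.ofReal_add (by positivity) (by positivity), add_halves]

/-- A single strongly measurable function is weakly tight. -/
theorem weaklyTightOn_const [CompleteSpace X] {ι : Type*} {μ : Measure Ω} [IsProbabilityMeasure μ]
    {f : Ω → X} (hf : StronglyMeasurable f) : WeaklyTightOn μ univ fun _ : ι => f := by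
  let M := (Submodule.span ℝ (range f)).topologicalClosure
  have hM : TopologicalSpace.IsSeparable (M : Set X) := isSeparable_closure_span
    hf.isSeparable_range
  have hMc : IsClosed (M : Set X) := Submodule.isClosed_topologicalClosure _
  let _ : MeasurableSpace M := borel M
  have : BorelSpace M := ⟨rfl⟩
  have : SecondCountableTopology M := hM.secondCountableTopology
  have : CompleteSpace M := hMc.completeSpace_coe
  let F : Ω → M := fun ω => ⟨f ω, Submodule.le_topologicalClosure _
    (Submodule.subset_span (mem_range_self ω))⟩
  have hF : Measurable F := by
    borelize X
    exact hMc.isClosedEmbedding_subtypeVal.measurableEmbedding.measurable_comp_iff.1 hf.measurable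
  have := Measure.isProbabilityMeasure_map (μ := μ) hF.aemeasurable
  intro δ hδ
  obtain ⟨K, hK, hKδ⟩ := isTightMeasureSet_iff_exists_isCompact_measure_compl_le.1
    (isTightMeasureSet_singleton (μ := μ.map F)) (ENNReal.ofReal δ) (by simpa using hδ)
  refine ⟨(↑) '' K, (hK.image continuous_subtype_val).isWeaklyCompact, fun _ => ?_⟩
  refine le_trans ?_ (hKδ _ rfl)
  rw [Measure.map_apply hF hK.measurableSet.compl]
  exact measure_mono fun ω hω h => hω.2 ⟨_, h, rfl⟩

/-- Weakly null sequences in `L¹` are weakly tight if those in `L^p` are. -/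
theorem weaklyTightOn_of_weakly_null [CompleteSpace X] {μ : Measure Ω} [IsProbabilityMeasure μ]
    {p : ℝ≥0∞} [hp : Fact (1 ≤ p)] (hp2 : p < ∞)
    (H : ∀ h : ℕ → Lp X p μ, (∀ φ : StrongDual ℝ (Lp X p μ),
      Tendsto (fun n => φ (h n)) atTop (𝓝 0)) → WeaklyTightOn μ univ fun n => (h n : Ω → X))
    {f : ℕ → Lp X 1 μ}
    (hf : ∀ φ : StrongDual ℝ (Lp X 1 μ), Tendsto (fun n => φ (f n)) atTop (𝓝 0)) :
    WeaklyTightOn μ univ fun n => (f n : Ω → X) := by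
  let M := (Submodule.span ℝ (⋃ n, range (f n))).topologicalClosure
  have hM : TopologicalSpace.IsSeparable (M : Set X) := isSeparable_closure_span
    (TopologicalSpace.IsSeparable.iUnion fun n => (Lp.stronglyMeasurable (f n)).isSeparable_range)
  have hMc : IsClosed (M : Set X) := Submodule.isClosed_topologicalClosure _
  let _ : MeasurableSpace M := borel M
  have : BorelSpace M := ⟨rfl⟩
  have : SecondCountableTopology M := hM.secondCountableTopology
  let F : Ω → ℕ → M := fun ω n => ⟨f n ω, Submodule.le_topologicalClosure _
    (Submodule.subset_span (mem_iUnion.2 ⟨n, mem_range_self ω⟩))⟩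
  have hF : Measurable F := by
    borelize X
    exact measurable_pi_lambda _ fun n =>
      hMc.isClosedEmbedding_subtypeVal.measurableEmbedding.measurable_comp_iff.1
        (Lp.stronglyMeasurable (f n)).measurable
  have := Measure.isProbabilityMeasure_map (μ := μ) hF.aemeasurable
  have hsing : ∀ y, MeasurableSet (F ⁻¹' {y}) := fun y => hF (measurableSet_singleton y)
  let N : Set (ℕ → M) := {y | 0 < μ.map F {y}}
  have hN : N.Countable := Measure.countable_meas_pos_of_disjoint_iUnion
    (fun y => measurableSet_singleton y) fun y z hyz => by simpa using hyz
  have hA : MeasurableSet (F ⁻¹' N) := hF hN.measurableSet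
  have h1 : WeaklyTightOn μ (F ⁻¹' N) fun n => (f n : Ω → X) := by
    rcases N.eq_empty_or_nonempty with h0 | h0
    · rw [h0, preimage_empty]
      exact fun δ _ => ⟨∅, by simp [IsWeaklyCompact], fun i => by simp⟩
    · obtain ⟨g, hg⟩ := hN.exists_eq_range h0
      have h2 : F ⁻¹' N = ⋃ i, F ⁻¹' {g i} := by
        rw [hg, ← preimage_iUnion, iUnion_singleton_eq_range]
      rw [h2]
      refine WeaklyTightOn.iUnion (fun i => hsing _) fun i =>
        weaklyTightOn_of_const hf (hsing (g i)) (y := fun n => g i n) fun n ω hω => ?_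
      rw [← show F ω = g i from hω]
  have h2 : WeaklyTightOn μ (F ⁻¹' N)ᶜ fun n => (f n : Ω → X) := by
    refine weaklyTightOn_of_atomless hp2 H hf hMc hF (fun n ω => rfl) hA.compl fun y => ?_
    rw [Measure.map_apply hF (measurableSet_singleton y), Measure.restrict_apply (hsing y)]
    by_cases hy : y ∈ N
    · rw [show F ⁻¹' {y} ∩ (F ⁻¹' N)ᶜ = ∅ from ?_, measure_empty]
      refine eq_empty_of_forall_notMem fun ω hω => hω.2 ?_
      rw [mem_preimage, show F ω = y from hω.1]
      exact hy
    · refine measure_mono_null inter_subset_left ?_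
      rw [← Measure.map_apply hF (measurableSet_singleton y)]
      simpa [N] using hy
  rw [← union_compl_self (F ⁻¹' N)]
  exact h1.union h2

/-- A bounded set in `L¹` all of whose sequences have weakly tight subsequences is weakly tight,
if relatively weakly compact sets in `L^p` are. -/
theorem exists_isWeaklyCompact_of_subseq [CompleteSpace X] {μ : Measure Ω}
    [IsProbabilityMeasure μ] {p : ℝ≥0∞} [hp : Fact (1 ≤ p)] (hp2 : p < ∞)
    (H : ∀ A : Set (Lp X p μ), IsRelWeaklyCompact A →
      WeaklyTightOn μ univ fun g : A => ((g : Lp X p μ) : Ω → X))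
    {K : Set (Lp X 1 μ)} {C : ℝ} (hC : ∀ f ∈ K, ‖f‖ ≤ C)
    (hK : ∀ u : ℕ → Lp X 1 μ, (∀ n, u n ∈ K) → ∃ ψ : ℕ → ℕ, StrictMono ψ ∧
      WeaklyTightOn μ univ (fun n => (u (ψ n) : Ω → X))) :
    WeaklyTightOn μ univ fun f : K => ((f : Lp X 1 μ) : Ω → X) := by
  intro δ hδ
  obtain ⟨R, hR0, hR⟩ := exists_measure_le_norm_le (X := X) μ C (half_pos hδ)
  let tr : X → X := (Metric.closedBall (0 : X) R).indicator id
  have htr : ∀ x, ‖tr x‖ ≤ R := by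
    intro x
    by_cases h : x ∈ Metric.closedBall (0 : X) R
    · simp only [tr]
      rw [indicator_of_mem h]
      exact mem_closedBall_zero_iff.1 h
    · simpa [tr, h] using hR0.le
  let A : Set (Lp X p μ) := {g | ∃ f ∈ K, g =ᵐ[μ] fun ω => tr (f ω)}
  have hA : IsRelWeaklyCompact A := by
    refine isRelWeaklyCompact_of_weaklyTight_subseq hp2 (C := R) ?_ ?_
    · rintro g ⟨f, -, hg⟩
      filter_upwards [hg] with ω hω
      rw [hω]
      exact htr _
    · intro g hg
      choose f hfK hgf using hg
      obtain ⟨ψ, hψ, ht⟩ := hK f hfK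
      refine ⟨ψ, hψ, WeaklyTightOn.congr (u := fun n ω => tr (f (ψ n) ω)) ?_
        fun n => (hgf (ψ n)).symm⟩
      intro δ hδ
      obtain ⟨W, hW, hWf⟩ := ht δ hδ
      refine ⟨W ∪ {0}, hW.union isCompact_singleton.isWeaklyCompact, fun n =>
        (measure_mono ?_).trans (hWf n)⟩
      refine sdiff_subset_sdiff_right fun ω hω => ?_
      by_cases h : f (ψ n) ω ∈ Metric.closedBall (0 : X) R
      · refine Or.inl ?_
        change tr (f (ψ n) ω) ∈ W
        rw [show tr (f (ψ n) ω) = f (ψ n) ω from indicator_of_mem h _]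
        exact hω
      · exact Or.inr (indicator_of_notMem h _)
  obtain ⟨W, hW, hWA⟩ := H A hA (δ / 2) (half_pos hδ)
  refine ⟨W, hW, fun ⟨f, hf⟩ => ?_⟩
  have htrf : StronglyMeasurable fun ω => tr (f ω) := by
    have : (fun ω => tr (f ω)) = ((f : Ω → X) ⁻¹' Metric.closedBall 0 R).indicator f := rfl
    rw [this]
    refine (Lp.stronglyMeasurable f).indicator ?_
    borelize X
    exact (Lp.stronglyMeasurable f).measurable Metric.isClosed_closedBall.measurableSet
  have hL : MemLp (fun ω => tr (f ω)) p μ :=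
    MemLp.of_bound htrf.aestronglyMeasurable R (ae_of_all _ fun ω => htr _)
  have h2 := hWA ⟨hL.toLp _, f, hf, hL.coeFn_toLp⟩
  calc μ (univ \ (f : Ω → X) ⁻¹' W)
      ≤ μ ({ω | R ≤ ‖f ω‖} ∪ (univ \ (hL.toLp _ : Lp X p μ) ⁻¹' W)) := by
        refine measure_mono_ae ?_
        filter_upwards [hL.coeFn_toLp] with ω h1 h3
        by_cases h4 : R ≤ ‖f ω‖
        · exact Or.inl h4
        · refine Or.inr ⟨trivial, fun h5 => h3.2 ?_⟩
          rw [mem_preimage, h1, show tr (f ω) = f ω from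
            indicator_of_mem (mem_closedBall_zero_iff.2 (not_le.1 h4).le) _] at h5
          exact h5
    _ ≤ ENNReal.ofReal (δ / 2) + ENNReal.ofReal (δ / 2) :=
        (measure_union_le _ _).trans (add_le_add (hR f (hC f hf)) h2)
    _ = ENNReal.ofReal δ := by
        rw [← ENNReal.ofReal_add (by positivity) (by positivity), add_halves]

/-- For `1 < p < ∞`: `X` has property (δSμ) iff every relatively weakly compact subset of
`L^p(μ,X)` is a δS-set of `L^p(μ,X)` (i.e. is bounded and for every `δ > 0` there is a weakly
compact `W ⊆ X` with `μ (f ⁻¹' W) ≥ 1 - δ` for all its elements). -/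
theorem deltaSProp_iff_Lp (p : ℝ≥0∞) [Fact (1 ≤ p)] (hp1 : 1 < p) (hp2 : p < ∞)
    (μ : Measure Ω) [IsProbabilityMeasure μ] [CompleteSpace X] :
    DeltaSProp μ X ↔ ∀ K : Set (Lp X p μ), IsRelWeaklyCompact K →
      ((∃ C : ℝ, ∀ f ∈ K, ‖f‖ ≤ C) ∧
        ∀ δ : ℝ, 0 < δ → ∃ W : Set X, IsWeaklyCompact W ∧
          ∀ f ∈ K, 1 - ENNReal.ofReal δ ≤ μ ((f : Ω → X) ⁻¹' W)) := by
  constructor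
  · refine fun h K hK => ⟨hK.exists_norm_le, fun δ hδ => ?_⟩
    obtain ⟨W, hW, hWK⟩ := (h _ (hK.image (lpToL1 p μ))).2 δ hδ
    refine ⟨W, hW, fun f hf => (hWK _ ⟨f, hf, rfl⟩).trans (measure_mono_ae ?_)⟩
    filter_upwards [coeFn_lpToL1 f] with ω hω h1
    have h2 : lpToL1 p μ f ω ∈ W := h1
    rwa [hω] at h2
  · intro h K hK
    have H : ∀ A : Set (Lp X p μ), IsRelWeaklyCompact A →
        WeaklyTightOn μ univ fun g : A => ((g : Lp X p μ) : Ω → X) := by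
      intro A hA δ hδ
      obtain ⟨W, hW, hWA⟩ := (h A hA).2 δ hδ
      exact ⟨W, hW, fun g => WeaklyTightOn.measure_diff_le hW (Lp.aestronglyMeasurable _)
        (hWA g g.2)⟩
    have H' : ∀ u : ℕ → Lp X p μ, (∀ φ : StrongDual ℝ (Lp X p μ),
        Tendsto (fun n => φ (u n)) atTop (𝓝 0)) →
        WeaklyTightOn μ univ fun n => (u n : Ω → X) := fun u hu =>
      (H _ (isRelWeaklyCompact_range (z := 0) fun φ => by simpa using hu φ)).comp
        fun n => (⟨u n, n, rfl⟩ : range u)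
    have hUI := hK.unifIntegrableSet
    obtain ⟨C, hC⟩ := hUI.1
    refine ⟨hUI, fun δ hδ => ?_⟩
    obtain ⟨W, hW, hWK⟩ := exists_isWeaklyCompact_of_subseq hp2 H hC (fun u hu => by
      obtain ⟨ψ, hψ, z, hz⟩ := hK.exists_subseq hu
      refine ⟨ψ, hψ, ?_⟩
      have h1 := weaklyTightOn_of_weakly_null hp2 H' (f := fun n => u (ψ n) - z) fun φ => by
        simpa using (hz φ).sub_const (φ z)
      refine (h1.add (weaklyTightOn_const (Lp.stronglyMeasurable z))).congr fun n => ?_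
      filter_upwards [Lp.coeFn_sub (u (ψ n)) z] with ω hω
      rw [Pi.add_apply, hω, Pi.sub_apply, sub_add_cancel]) δ hδ
    exact ⟨W, hW, fun f hf => WeaklyTightOn.le_measure (hWK ⟨f, hf⟩)⟩
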